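/- Let n ≥ 5, p ≥ 1 and 1 < s < (n+4)/(n−4). There exists a constant C > 0, depending only on n, p and s, such that for every nonnegative C⁴ solution U = (u_1, …, u_p) of Δ² u_i = |U|^{s−1} u_i on the open unit ball B₁ ⊂ ℝ^n that extends continuously to the closed ball, one has |U(x)| ≤ C (1 − |x|)^{−4/(s−1)} for all x ∈ B₁. -/

import Mathlib

open MeasureTheory Metric Filter Topology

/-- The Euclidean Laplacian: sum of second partial derivatives. -/
noncomputable def lap {n : ℕ} (u : EuclideanSpace ℝ (Fin n) → ℝ)
    (x : EuclideanSpace ℝ (Fin n)) : ℝ :=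
  ∑ i : Fin n,
    fderiv ℝ (fun y => fderiv ℝ u y (EuclideanSpace.single i 1)) x
      (EuclideanSpace.single i 1)

/-- The bi-Laplacian Δ² = Δ ∘ Δ. -/
noncomputable def bilap {n : ℕ} (u : EuclideanSpace ℝ (Fin n) → ℝ) :
    EuclideanSpace ℝ (Fin n) → ℝ :=
  lap (lap u)

/-- The pointwise Euclidean norm |U(x)| of a p-map U. -/
noncomputable def vnorm {n p : ℕ} (U : Fin p → EuclideanSpace ℝ (Fin n) → ℝ)
    (x : EuclideanSpace ℝ (Fin n)) : ℝ :=
  Real.sqrt (∑ i, U i x ^ 2)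

/-!
Multiplying by a cutoff of the fundamental solution turns the differential system into an integral
identity on balls, which survives bounded pointwise limits. If the bound failed, the doubling lemma
and the scaling `U ↦ λ ^ (4 / (s - 1)) • U (a + λ • ·)` would give solutions on larger and larger
balls, uniformly bounded and of norm `1` at the origin; the integral identity makes them
equicontinuous, so a subsequence converges to a bounded entire solution, which satisfies the
integral equation with the Riesz kernel `‖y - z‖ ^ (4 - n)`.

The method of moving spheres applies to that equation: because `s` is subcritical, the Kelvin
transform of `U` stays below `U` outside every sphere, whatever its centre and radius. Letting the
centre go to infinity along the line through two given points compares the values there in both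
orders, so `U` is constant. The Riesz kernel not being integrable at infinity, the constant is `0`,
which contradicts the normalisation at the origin.
-/

section Laplacian

variable {n : ℕ} {u v φ : EuclideanSpace ℝ (Fin n) → ℝ}

local notation "𝔼" => EuclideanSpace ℝ (Fin n)

lemma contDiff_lap {k j : WithTop ℕ∞} (hu : ContDiff ℝ j u) (hkj : k + 2 ≤ j) :
    ContDiff ℝ k (lap u) := by
  have h₁ (w : 𝔼) : ContDiff ℝ (k + 1) (fun y => fderiv ℝ u y w) :=
    (hu.fderiv_right (by rwa [add_assoc, one_add_one_eq_two])).clm_apply contDiff_const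
  exact ContDiff.sum fun i _ => ((h₁ _).fderiv_right le_rfl).clm_apply contDiff_const

lemma hasCompactSupport_lap (hu : HasCompactSupport u) : HasCompactSupport (lap u) := by
  refine HasCompactSupport.intro hu fun x hx => Finset.sum_eq_zero fun i _ => ?_
  refine image_eq_zero_of_notMem_tsupport (f := fun z => fderiv ℝ (fun y => fderiv ℝ u y
    (EuclideanSpace.single i 1)) z (EuclideanSpace.single i 1)) fun h => hx ?_
  exact tsupport_fderiv_apply_subset ℝ _ (tsupport_fderiv_apply_subset ℝ _ h)

lemma lap_eventuallyEq {x : 𝔼} (h : u =ᶠ[𝓝 x] v) : lap u =ᶠ[𝓝 x] lap v := by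
  have fderiv_apply_congr {f g : 𝔼 → ℝ} (w : 𝔼) (hfg : f =ᶠ[𝓝 x] g) :
      (fun y => fderiv ℝ f y w) =ᶠ[𝓝 x] fun y => fderiv ℝ g y w :=
    (hfg.fderiv (𝕜 := ℝ)).mono fun y hy => by simp only [hy]
  filter_upwards [eventually_all.2 fun i : Fin n =>
    fderiv_apply_congr (.single i 1) (fderiv_apply_congr (.single i 1) h)] with z hz
  exact Finset.sum_congr rfl fun i _ => hz i

lemma bilap_congr_of_eventuallyEq {x : 𝔼} (h : u =ᶠ[𝓝 x] v) : bilap u x = bilap v x :=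
  (lap_eventuallyEq (lap_eventuallyEq h)).eq_of_nhds

lemma lap_const_mul_comp_affine (u : 𝔼 → ℝ) (b l : ℝ) (a x : 𝔼) :
    lap (fun y => b * u (a + l • y)) x = b * l ^ 2 * lap u (a + l • x) := by
  have fderiv_affine (f : 𝔼 → ℝ) (c : ℝ) (y w : 𝔼) :
      fderiv ℝ (fun y => c * f (a + l • y)) y w = c * l * fderiv ℝ f (a + l • y) w := by
    have h : (fun y => c * f (a + l • y)) = c • fun y => (fun z => f (a + z)) (l • y) := by
      ext y; simp
    rw [h, fderiv_const_smul_field, Pi.smul_apply,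
      fderiv_comp_smul (𝕜 := ℝ) (f := fun z => f (a + z)) (c := l) (x := y), fderiv_comp_add_left]
    simp [mul_assoc]
  simp_rw [lap, Finset.mul_sum, fderiv_affine u b]
  refine Finset.sum_congr rfl fun i _ => ?_
  rw [fderiv_affine (fun z => fderiv ℝ u z (EuclideanSpace.single i 1)) (b * l)]
  ring

lemma bilap_const_mul_comp_affine (u : 𝔼 → ℝ) (b l : ℝ) (a x : 𝔼) :
    bilap (fun y => b * u (a + l • y)) x = b * l ^ 4 * bilap u (a + l • x) := by
  have h : lap (fun y => b * u (a + l • y)) = fun y => (b * l ^ 2) * lap u (a + l • y) :=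
    funext fun y => lap_const_mul_comp_affine u b l a y
  rw [bilap, h, lap_const_mul_comp_affine, bilap]
  ring

lemma integral_mul_lap (hφ : ContDiff ℝ 2 φ) (hv : ContDiff ℝ 2 v) (hc : HasCompactSupport v) :
    ∫ x, φ x * lap v x = ∫ x, lap φ x * v x := by
  have contDiff_pderiv {f : 𝔼 → ℝ} (hf : ContDiff ℝ 2 f) (w : 𝔼) :
      ContDiff ℝ 1 (fun y => fderiv ℝ f y w) :=
    (hf.fderiv_right one_add_one_eq_two.le).clm_apply contDiff_const
  have continuous_pderiv₂ {f : 𝔼 → ℝ} (hf : ContDiff ℝ 2 f) (w : 𝔼) :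
      Continuous (fun z => fderiv ℝ (fun y => fderiv ℝ f y w) z w) :=
    ((contDiff_pderiv hf w).continuous_fderiv one_ne_zero).clm_apply continuous_const
  have hc₁ (w : 𝔼) : HasCompactSupport (fun y => fderiv ℝ v y w) := hc.fderiv_apply (𝕜 := ℝ) w
  have hc₂ (w : 𝔼) : HasCompactSupport (fun z => fderiv ℝ (fun y => fderiv ℝ v y w) z w) :=
    (hc₁ w).fderiv_apply (𝕜 := ℝ) w
  have integrable_mul {a b : 𝔼 → ℝ} (ha : Continuous a) (hb : Continuous b)
      (hcb : HasCompactSupport b) : Integrable (fun x => a x * b x) :=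
    (ha.mul hb).integrable_of_hasCompactSupport hcb.mul_left
  have hφ₁ := contDiff_pderiv hφ
  have hv₁ := contDiff_pderiv hv
  have parts_twice (w : 𝔼) : ∫ x, φ x * fderiv ℝ (fun y => fderiv ℝ v y w) x w
      = ∫ x, fderiv ℝ (fun y => fderiv ℝ φ y w) x w * v x := by
    have hφv' := integrable_mul hφ.continuous (hv₁ w).continuous (hc₁ w)
    have hφv'' := integrable_mul hφ.continuous (continuous_pderiv₂ hv w) (hc₂ w)
    have hφ'v := integrable_mul (hφ₁ w).continuous hv.continuous hc
    have hφ'v' := integrable_mul (hφ₁ w).continuous (hv₁ w).continuous (hc₁ w)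
    have hφ''v := integrable_mul (continuous_pderiv₂ hφ w) hv.continuous hc
    rw [integral_mul_fderiv_eq_neg_fderiv_mul_of_integrable hφ'v' hφv'' hφv'
        (fun x _ => hφ.differentiable two_ne_zero x)
        (fun x _ => (hv₁ w).differentiable one_ne_zero x),
      integral_mul_fderiv_eq_neg_fderiv_mul_of_integrable hφ''v hφ'v' hφ'v
        (fun x _ => (hφ₁ w).differentiable one_ne_zero x)
        (fun x _ => hv.differentiable two_ne_zero x), neg_neg]
  simp_rw [lap, Finset.mul_sum, Finset.sum_mul]
  rw [integral_finsetSum _ fun i _ =>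
      integrable_mul hφ.continuous (continuous_pderiv₂ hv _) (hc₂ _),
    integral_finsetSum _ fun i _ => integrable_mul (continuous_pderiv₂ hφ _) hv.continuous hc]
  exact Finset.sum_congr rfl fun i _ => parts_twice _

lemma integral_mul_bilap (hφ : ContDiff ℝ 4 φ) (hv : ContDiff ℝ 4 v) (hc : HasCompactSupport v) :
    ∫ x, φ x * bilap v x = ∫ x, bilap φ x * v x := by
  have two_add_two : (2 : WithTop ℕ∞) + 2 ≤ 4 := by norm_num
  rw [bilap, integral_mul_lap (hφ.of_le (by norm_num)) (contDiff_lap hv two_add_two)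
      (hasCompactSupport_lap hc),
    integral_mul_lap (contDiff_lap hφ two_add_two) (hv.of_le (by norm_num)) hc, bilap]

lemma hasFDerivAt_comp_norm_sq {F : ℝ → ℝ} {F' : ℝ} {z : 𝔼}
    (hF : HasDerivAt F F' (‖z‖ ^ 2)) :
    HasFDerivAt (fun z : 𝔼 => F (‖z‖ ^ 2)) (F' • (2 : ℕ) • innerSL ℝ z) z :=
  hF.comp_hasFDerivAt z (hasStrictFDerivAt_norm_sq z).hasFDerivAt

lemma lap_radial {F F' F'' : ℝ → ℝ} (hF : ∀ t, 0 ≤ t → HasDerivAt F (F' t) t)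
    (hF' : ∀ t, 0 ≤ t → HasDerivAt F' (F'' t) t) (z : 𝔼) :
    lap (fun z : 𝔼 => F (‖z‖ ^ 2)) z = 4 * ‖z‖ ^ 2 * F'' (‖z‖ ^ 2) + 2 * n * F' (‖z‖ ^ 2) := by
  have pderiv (i : Fin n) (z : 𝔼) :
      fderiv ℝ (fun z : 𝔼 => F (‖z‖ ^ 2)) z (EuclideanSpace.single i 1)
        = 2 * F' (‖z‖ ^ 2) * z i := by
    rw [(hasFDerivAt_comp_norm_sq (hF _ (sq_nonneg _))).fderiv]
    simp [EuclideanSpace.inner_single_right]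
    ring
  have pderiv₂ (i : Fin n) : fderiv ℝ (fun y : 𝔼 => 2 * F' (‖y‖ ^ 2) * y i) z
      (EuclideanSpace.single i 1) = 4 * F'' (‖z‖ ^ 2) * z i ^ 2 + 2 * F' (‖z‖ ^ 2) := by
    have hF'z := (hasFDerivAt_comp_norm_sq (hF' _ (sq_nonneg ‖z‖))).const_mul 2
    have hproj : HasFDerivAt (fun y : 𝔼 => y i) (EuclideanSpace.proj i : 𝔼 →L[ℝ] ℝ) z :=
      (EuclideanSpace.proj i : 𝔼 →L[ℝ] ℝ).hasFDerivAt
    rw [(hF'z.fun_mul hproj).fderiv]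
    simp [EuclideanSpace.inner_single_right]
    ring
  simp_rw [lap, pderiv, pderiv₂]
  rw [Finset.sum_add_distrib, ← Finset.mul_sum, ← EuclideanSpace.real_norm_sq_eq, Finset.sum_const,
    Finset.card_fin, nsmul_eq_mul]
  ring

lemma bilap_radial {F : ℕ → ℝ → ℝ}
    (hF : ∀ k, ∀ t, 0 ≤ t → HasDerivAt (F k) (F (k + 1) t) t) (z : 𝔼) :
    bilap (fun z : 𝔼 => F 0 (‖z‖ ^ 2)) z
      = 16 * (‖z‖ ^ 2) ^ 2 * F 4 (‖z‖ ^ 2) + 16 * (n + 2) * ‖z‖ ^ 2 * F 3 (‖z‖ ^ 2)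
        + 4 * n * (n + 2) * F 2 (‖z‖ ^ 2) := by
  have deriv_radial (k : ℕ) (c t : ℝ) (ht : 0 ≤ t) :
      HasDerivAt (fun t => 4 * (t * F (k + 1) t) + c * F k t)
        (4 * (t * F (k + 2) t) + (c + 4) * F (k + 1) t) t := by
    refine ((((hasDerivAt_id' t).fun_mul (hF (k + 1) t ht)).const_mul 4).fun_add
      ((hF k t ht).const_mul c)).congr_deriv ?_
    ring
  have hlap : lap (fun z : 𝔼 => F 0 (‖z‖ ^ 2)) =
      fun z : 𝔼 => (fun t => 4 * (t * F 2 t) + 2 * n * F 1 t) (‖z‖ ^ 2) := by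
    funext z
    rw [lap_radial (hF 0) (hF 1), mul_assoc 4]
  rw [bilap, hlap, lap_radial (deriv_radial 1 _) (deriv_radial 2 _)]
  ring

end Laplacian

section Cutoff

/-- A smooth cutoff on the line, equal to `1` on `(-∞, 1/2]` and to `0` on `[1, ∞)`. It is always
evaluated at a squared norm, so that the resulting function on space is smooth at the origin. -/
noncomputable def cutoff (t : ℝ) : ℝ := Real.smoothTransition (2 - 2 * t)

lemma contDiff_cutoff {k : ℕ∞} : ContDiff ℝ k cutoff :=
  Real.smoothTransition.contDiff.comp (by fun_prop)

@[fun_prop]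
lemma continuous_cutoff : Continuous cutoff := (contDiff_cutoff (k := 0)).continuous

lemma cutoff_eq_one {t : ℝ} (ht : t ≤ 1 / 2) : cutoff t = 1 :=
  Real.smoothTransition.one_of_one_le (by linarith)

lemma cutoff_eq_zero {t : ℝ} (ht : 1 ≤ t) : cutoff t = 0 :=
  Real.smoothTransition.zero_of_nonpos (by linarith)

lemma cutoff_nonneg (t : ℝ) : 0 ≤ cutoff t := Real.smoothTransition.nonneg _

lemma cutoff_le_one (t : ℝ) : cutoff t ≤ 1 := Real.smoothTransition.le_one _

@[fun_prop]
lemma continuous_iteratedDeriv_cutoff (k : ℕ) : Continuous (iteratedDeriv k cutoff) :=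
  (contDiff_cutoff (k := k)).continuous_iteratedDeriv k le_rfl

lemma iteratedDeriv_succ_cutoff_eq_zero_of_lt (k : ℕ) {t : ℝ} (ht : t < 1 / 2) :
    iteratedDeriv (k + 1) cutoff t = 0 := by
  have h : cutoff =ᶠ[𝓝 t] fun _ => 1 := by
    filter_upwards [Iio_mem_nhds ht] with y hy using cutoff_eq_one (le_of_lt hy)
  simp [h.iteratedDeriv_eq, iteratedDeriv_const]

lemma iteratedDeriv_cutoff_eq_zero_of_one_le (k : ℕ) {t : ℝ} (ht : 1 ≤ t) :
    iteratedDeriv k cutoff t = 0 := by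
  have hclosed : IsClosed {t | iteratedDeriv k cutoff t = 0} :=
    isClosed_eq (continuous_iteratedDeriv_cutoff k) continuous_const
  have hIoi : Set.Ioi (1 : ℝ) ⊆ {t | iteratedDeriv k cutoff t = 0} := fun t ht => by
    have h : cutoff =ᶠ[𝓝 t] fun _ => 0 := by
      filter_upwards [Ioi_mem_nhds ht] with y hy using cutoff_eq_zero (le_of_lt hy)
    simp [h.iteratedDeriv_eq]
  have := closure_minimal hIoi hclosed
  rw [closure_Ioi] at this
  exact this ht

end Cutoff

section RegularisedKernel

/-- The terms of the Leibniz expansion of the `k`-th derivative of `t ↦ cutoff t * (t + e) ^ a` in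
which at least one derivative falls on the cutoff. The maximum with `1 / 4` changes nothing for
`0 ≤ e`, since those derivatives vanish for `t < 1 / 2`, and makes the sum continuous at
`e = t = 0`. -/
noncomputable def leibnizTail (a : ℝ) (k : ℕ) (e t : ℝ) : ℝ :=
  ∑ i ∈ Finset.range k, k.choose (i + 1) * iteratedDeriv (i + 1) cutoff t *
    ((descPochhammer ℝ (k - (i + 1))).eval a * max (t + e) (1 / 4) ^ (a - (k - (i + 1) : ℕ)))

/-- The part of the bi-Laplacian of the truncated kernel `cutoff (‖z‖²) * (‖z‖² + e) ^ (-m / 2)` in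
dimension `m + 4` that is created by the cutoff, with a minus sign, as a function of `t = ‖z‖²`. -/
noncomputable def cutoffError (m : ℕ) (e t : ℝ) : ℝ :=
  -(16 * t ^ 2 * leibnizTail (-m / 2) 4 e t + 16 * (m + 6) * t * leibnizTail (-m / 2) 3 e t
    + 4 * (m + 4) * (m + 6) * leibnizTail (-m / 2) 2 e t)

lemma continuous_leibnizTail (a : ℝ) (k : ℕ) :
    Continuous (fun x : ℝ × ℝ => leibnizTail a k x.1 x.2) := by
  have hpow (b : ℝ) : Continuous (fun x : ℝ × ℝ => max (x.2 + x.1) (1 / 4) ^ b) :=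
    Continuous.rpow_const (by fun_prop) fun x =>
      .inl (lt_max_of_lt_right (by norm_num : (0 : ℝ) < 1 / 4)).ne'
  unfold leibnizTail
  fun_prop

lemma continuous_cutoffError (m : ℕ) : Continuous (fun x : ℝ × ℝ => cutoffError m x.1 x.2) := by
  have h := continuous_leibnizTail (-m / 2)
  unfold cutoffError
  fun_prop

lemma cutoffError_eq_zero (m : ℕ) (e : ℝ) {t : ℝ} (ht : 1 ≤ t) : cutoffError m e t = 0 := by
  simp [cutoffError, leibnizTail, iteratedDeriv_cutoff_eq_zero_of_one_le _ ht]

lemma iteratedDeriv_add_const_rpow (a e t : ℝ) (k : ℕ) :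
    iteratedDeriv k (fun t => (t + e) ^ a) t
      = (descPochhammer ℝ k).eval a * (t + e) ^ (a - k) := by
  have h := congrFun (iteratedDeriv_comp_add_const k (fun t : ℝ => t ^ a) e) t
  rw [h, iteratedDeriv_eq_iterate, Real.iter_deriv_rpow_const]

lemma contDiffAt_add_const_rpow (a : ℝ) {e t : ℝ} (ht : 0 < t + e) {k : WithTop ℕ∞} :
    ContDiffAt ℝ k (fun t => (t + e) ^ a) t :=
  (contDiffAt_id.add contDiffAt_const).rpow_const_of_ne ht.ne'

lemma iteratedDeriv_cutoff_mul_rpow (a : ℝ) {e t : ℝ} (he : 0 < e) (ht : 0 ≤ t) (k : ℕ) :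
    iteratedDeriv k (fun t => cutoff t * (t + e) ^ a) t
      = cutoff t * ((descPochhammer ℝ k).eval a * (t + e) ^ (a - k)) + leibnizTail a k e t := by
  have hte : 0 < t + e := by linarith
  rw [iteratedDeriv_fun_mul contDiff_cutoff.contDiffAt (contDiffAt_add_const_rpow a hte),
    Finset.sum_range_succ', add_comm]
  simp only [iteratedDeriv_add_const_rpow, Nat.choose_zero_right, Nat.cast_one, one_mul,
    iteratedDeriv_zero, Nat.sub_zero, leibnizTail]
  congr 1
  refine Finset.sum_congr rfl fun i _ => ?_
  rcases lt_or_ge t (1 / 2) with h | h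
  · simp only [iteratedDeriv_succ_cutoff_eq_zero_of_lt i h, mul_zero, zero_mul]
  · rw [max_eq_left (by linarith)]

lemma hasDerivAt_iteratedDeriv {f : ℝ → ℝ} {t : ℝ} {k : ℕ} (hf : ContDiffAt ℝ (k + 1 : ℕ) f t) :
    HasDerivAt (iteratedDeriv k f) (iteratedDeriv (k + 1) f t) t := by
  have h : DifferentiableWithinAt ℝ (iteratedDerivWithin k f Set.univ) Set.univ t :=
    hf.contDiffWithinAt.differentiableWithinAt_iteratedDerivWithin
      (by exact_mod_cast Nat.lt_succ_self k) (by simp)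
  rw [differentiableWithinAt_univ, iteratedDerivWithin_univ] at h
  simpa only [iteratedDeriv_succ] using h.hasDerivAt

variable {m : ℕ}

local notation "𝔼" => EuclideanSpace ℝ (Fin (m + 4))

/-- The constant `κ` for which `‖z‖ ^ (-m) / κ` is the fundamental solution of `Δ²` in dimension
`m + 4`, in the form in which it arises from the regularisation `(‖z‖² + δ²) ^ (-m / 2)`. -/
noncomputable def biharmonicConst (m : ℕ) : ℝ :=
  m * (m + 2) * (m + 4) * (m + 6) *
    ∫ x : EuclideanSpace ℝ (Fin (m + 4)), (1 + ‖x‖ ^ 2) ^ (-((m : ℝ) + 8) / 2)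

lemma bilap_cutoff_mul_rpow {e : ℝ} (he : 0 < e) (z : 𝔼) :
    bilap (fun z : 𝔼 => cutoff (‖z‖ ^ 2) * (‖z‖ ^ 2 + e) ^ (-(m : ℝ) / 2)) z
      = m * (m + 2) * (m + 4) * (m + 6) *
          (cutoff (‖z‖ ^ 2) * (e ^ 2 * (‖z‖ ^ 2 + e) ^ (-(m : ℝ) / 2 - 4)))
        - cutoffError m e (‖z‖ ^ 2) := by
  have hF := bilap_radial
    (F := fun k => iteratedDeriv k fun t => cutoff t * (t + e) ^ (-(m : ℝ) / 2))
    (fun k t ht => hasDerivAt_iteratedDeriv <| (contDiff_cutoff (k := (k + 1 : ℕ))).contDiffAt.mul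
      (contDiffAt_add_const_rpow _ (by linarith))) z
  simp only [iteratedDeriv_zero] at hF
  rw [hF]
  have ht : 0 ≤ ‖z‖ ^ 2 := by positivity
  simp only [iteratedDeriv_cutoff_mul_rpow _ he ht]
  generalize ‖z‖ ^ 2 = t at *
  have hte : 0 < t + e := by linarith
  have pow_shift (j : ℕ) (hj : j ≤ 4) : (t + e) ^ (-(m : ℝ) / 2 - j)
      = (t + e) ^ (4 - j) * (t + e) ^ (-(m : ℝ) / 2 - 4) := by
    rw [← Real.rpow_natCast, ← Real.rpow_add hte, Nat.cast_sub hj]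
    congr 1
    push_cast
    ring
  rw [pow_shift 2 (by norm_num), pow_shift 3 (by norm_num), pow_shift 4 le_rfl]
  simp only [descPochhammer_succ_right, descPochhammer_zero, cutoffError, Polynomial.eval_mul,
    Polynomial.eval_sub, Polynomial.eval_X, Polynomial.eval_natCast, Polynomial.eval_one]
  push_cast
  ring

end RegularisedKernel

section TruncatedRiesz

variable {E : Type*} [NormedAddCommGroup E]

/-- The Riesz kernel `‖z‖ ^ (-m)` localised to the unit ball. -/
noncomputable def truncatedRiesz (m : ℕ) (z : E) : ℝ := cutoff (‖z‖ ^ 2) * (‖z‖ ^ m)⁻¹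

lemma truncatedRiesz_nonneg (m : ℕ) (z : E) : 0 ≤ truncatedRiesz m z :=
  mul_nonneg (cutoff_nonneg _) (by positivity)

lemma truncatedRiesz_le (m : ℕ) (z : E) : truncatedRiesz m z ≤ (‖z‖ ^ m)⁻¹ :=
  mul_le_of_le_one_left (by positivity) (cutoff_le_one _)

lemma truncatedRiesz_eq_zero (m : ℕ) {z : E} (hz : 1 ≤ ‖z‖) : truncatedRiesz m z = 0 := by
  rw [truncatedRiesz, cutoff_eq_zero (one_le_pow₀ hz), zero_mul]

lemma inv_norm_pow_eq_rpow (m : ℕ) (z : E) : (‖z‖ ^ m)⁻¹ = (‖z‖ ^ 2) ^ (-(m : ℝ) / 2) := by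
  rw [← Real.rpow_natCast ‖z‖ 2, ← Real.rpow_mul (norm_nonneg _), ← Real.rpow_natCast,
    ← Real.rpow_neg (norm_nonneg _)]
  congr 1
  push_cast
  ring

lemma tendsto_norm_pow_mul_rpow_neg_one_add_norm_sq {d : ℕ} {r : ℝ} (hr : d < r) :
    Tendsto (fun x : E => ‖x‖ ^ d * (1 + ‖x‖ ^ 2) ^ (-r / 2)) (Bornology.cobounded E) (𝓝 0) := by
  have hdecay : Tendsto (fun x : E => ‖x‖ ^ (-(r - d))) (Bornology.cobounded E) (𝓝 0) :=
    (tendsto_rpow_neg_atTop (sub_pos.2 hr)).comp tendsto_norm_cobounded_atTop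
  refine squeeze_zero' (Eventually.of_forall fun x => by positivity) ?_ hdecay
  filter_upwards [tendsto_norm_cobounded_atTop.eventually (eventually_gt_atTop (0 : ℝ))] with x hx
  have hr0 : -r / 2 ≤ 0 := by linarith [(Nat.cast_nonneg d : (0 : ℝ) ≤ d)]
  calc ‖x‖ ^ d * (1 + ‖x‖ ^ 2) ^ (-r / 2) ≤ ‖x‖ ^ d * (‖x‖ ^ 2) ^ (-r / 2) := by
        gcongr ?_ * ?_
        exact Real.rpow_le_rpow_of_nonpos (by positivity) (by linarith) hr0
    _ = ‖x‖ ^ (-(r - d)) := by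
        rw [← Real.rpow_natCast, ← Real.rpow_natCast, ← Real.rpow_mul hx.le, ← Real.rpow_add hx]
        congr 1
        push_cast
        ring

variable [MeasurableSpace E] [BorelSpace E]

@[fun_prop]
lemma measurable_truncatedRiesz (m : ℕ) : Measurable (truncatedRiesz m : E → ℝ) := by
  have : Measurable (fun z : E => cutoff (‖z‖ ^ 2)) := by fun_prop
  unfold truncatedRiesz
  fun_prop

variable [NormedSpace ℝ E] [FiniteDimensional ℝ E] {μ : Measure E} [μ.IsAddHaarMeasure]

lemma integrableOn_ball_inv_norm_pow {m : ℕ} (hm : m < Module.finrank ℝ E) (r : ℝ) :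
    IntegrableOn (fun z : E => (‖z‖ ^ m)⁻¹) (ball 0 r) μ := by
  refine integrableOn_ball_of_norm_le_rpow (C := 1) (α := m) (by omega) (by exact_mod_cast hm)
    (Eventually.of_forall fun z => ?_) (by fun_prop)
  rw [Real.rpow_neg (norm_nonneg _), Real.rpow_natCast, one_mul,
    Real.norm_of_nonneg (by positivity)]

lemma integrable_truncatedRiesz {m : ℕ} (hm : m < Module.finrank ℝ E) :
    Integrable (truncatedRiesz m : E → ℝ) μ := by
  rw [← integrableOn_iff_integrable_of_support_subset (s := ball 0 1)]
  · refine (integrableOn_ball_inv_norm_pow hm 1).mono' (by fun_prop)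
      (Eventually.of_forall fun z => ?_)
    rw [Real.norm_of_nonneg (truncatedRiesz_nonneg _ _)]
    exact truncatedRiesz_le m z
  · intro z hz
    by_contra h
    exact hz (truncatedRiesz_eq_zero m (by simpa using h))

lemma tendsto_integral_regularised_truncatedRiesz {m : ℕ} (hm : m < Module.finrank ℝ E)
    {v : E → ℝ} (hv : Measurable v) {B : ℝ} (hB : ∀ z, ‖v z‖ ≤ B) :
    Tendsto (fun δ : ℝ => ∫ z, cutoff (‖z‖ ^ 2) * (‖z‖ ^ 2 + δ ^ 2) ^ (-(m : ℝ) / 2) * v z ∂μ)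
      (𝓝[>] 0) (𝓝 (∫ z, truncatedRiesz m z * v z ∂μ)) := by
  have hcutoff : Measurable (fun z : E => cutoff (‖z‖ ^ 2)) := by fun_prop
  have : Nontrivial E := Module.nontrivial_of_finrank_pos (R := ℝ) (by omega)
  have hne : ∀ᵐ z ∂μ, 0 < ‖z‖ ^ 2 :=
    (Measure.ae_ne μ 0).mono fun z hz => by positivity
  simp only [truncatedRiesz, inv_norm_pow_eq_rpow]
  refine tendsto_integral_filter_of_dominated_convergence (fun z => truncatedRiesz m z * B)
    (Eventually.of_forall fun δ => by fun_prop) ?_ ((integrable_truncatedRiesz hm).mul_const B) ?_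
  · refine Eventually.of_forall fun δ => ?_
    filter_upwards [hne] with z hz
    rw [norm_mul, Real.norm_of_nonneg (mul_nonneg (cutoff_nonneg _) (by positivity)),
      truncatedRiesz, inv_norm_pow_eq_rpow]
    have : (‖z‖ ^ 2 + δ ^ 2) ^ (-(m : ℝ) / 2) ≤ (‖z‖ ^ 2) ^ (-(m : ℝ) / 2) :=
      Real.rpow_le_rpow_of_nonpos hz (by nlinarith)
        (div_nonpos_of_nonpos_of_nonneg (by simp) zero_le_two)
    gcongr
    · exact mul_nonneg (cutoff_nonneg _) (by positivity)
    · exact cutoff_nonneg _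
    · exact hB z
  · filter_upwards [hne] with z hz
    have h : Tendsto (fun δ : ℝ => ‖z‖ ^ 2 + δ ^ 2) (𝓝[>] 0) (𝓝 (‖z‖ ^ 2)) :=
      (Continuous.tendsto' (by fun_prop) 0 _ (by simp)).mono_left nhdsWithin_le_nhds
    exact ((h.rpow_const (.inl hz.ne')).const_mul _).mul_const _

end TruncatedRiesz

section LocalRepresentation

variable {m : ℕ}

local notation "𝔼" => EuclideanSpace ℝ (Fin (m + 4))

variable (m) in
lemma integrable_bubble :
    Integrable (fun x : 𝔼 => (1 + ‖x‖ ^ 2) ^ (-((m : ℝ) + 8) / 2)) :=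
  integrable_rpow_neg_one_add_norm_sq (by simp; linarith)

variable (m) in
lemma integral_bubble_pos :
    0 < ∫ x : 𝔼, (1 + ‖x‖ ^ 2) ^ (-((m : ℝ) + 8) / 2) := by
  have hpos (x : 𝔼) : 0 < (1 + ‖x‖ ^ 2) ^ (-((m : ℝ) + 8) / 2) := by positivity
  rw [integral_pos_iff_support_of_nonneg (fun x => (hpos x).le) (integrable_bubble m),
    Set.eq_univ_of_forall fun x => Function.mem_support.2 (hpos x).ne']
  exact isOpen_univ.measure_pos _ Set.univ_nonempty

lemma biharmonicConst_pos (hm : 0 < m) : 0 < biharmonicConst m := by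
  have := integral_bubble_pos m
  unfold biharmonicConst
  positivity

/-- The kernel against which a function is integrated in the zeroth order term of the local
representation formula. -/
noncomputable def cutoffErrorKernel (m : ℕ) (z : EuclideanSpace ℝ (Fin (m + 4))) : ℝ :=
  cutoffError m 0 (‖z‖ ^ 2)

lemma continuous_cutoffErrorKernel : Continuous (cutoffErrorKernel m) :=
  (continuous_cutoffError m).comp (by fun_prop : Continuous fun z : 𝔼 => ((0 : ℝ), ‖z‖ ^ 2))

lemma cutoffErrorKernel_eq_zero {z : 𝔼} (hz : 1 ≤ ‖z‖) : cutoffErrorKernel m z = 0 :=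
  cutoffError_eq_zero _ _ (one_le_pow₀ hz)

lemma rescaled_bubble_eq (x : 𝔼) {δ : ℝ} (hδ : 0 < δ) :
    δ⁻¹ ^ (m + 4) * (1 + ‖δ⁻¹ • x‖ ^ 2) ^ (-((m : ℝ) + 8) / 2)
      = (δ ^ 2) ^ 2 * (‖x‖ ^ 2 + δ ^ 2) ^ (-(m : ℝ) / 2 - 4) := by
  have hsum : 1 + ‖δ⁻¹ • x‖ ^ 2 = (δ ^ 2)⁻¹ * (‖x‖ ^ 2 + δ ^ 2) := by
    rw [norm_smul, Real.norm_of_nonneg (by positivity)]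
    field_simp
    ring
  have hpow : ((δ ^ 2)⁻¹ : ℝ) ^ (-((m : ℝ) + 8) / 2) = δ ^ (m + 8) := by
    rw [← Real.rpow_natCast δ 2, ← Real.rpow_neg hδ.le, ← Real.rpow_mul hδ.le, ← Real.rpow_natCast]
    congr 1
    push_cast
    ring
  rw [hsum, Real.mul_rpow (by positivity) (by positivity), hpow,
    show -((m : ℝ) + 8) / 2 = -(m : ℝ) / 2 - 4 by ring, ← mul_assoc]
  congr 1
  rw [inv_pow, inv_mul_eq_iff_eq_mul₀ (by positivity)]
  ring

lemma tendsto_integral_concentrating_bubble {v : 𝔼 → ℝ} (hv : Continuous v)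
    (hc : HasCompactSupport v) :
    Tendsto (fun δ : ℝ => ∫ z : 𝔼, cutoff (‖z‖ ^ 2) *
        ((δ ^ 2) ^ 2 * (‖z‖ ^ 2 + δ ^ 2) ^ (-(m : ℝ) / 2 - 4)) * v z) (𝓝[>] 0)
      (𝓝 ((∫ x : 𝔼, (1 + ‖x‖ ^ 2) ^ (-((m : ℝ) + 8) / 2)) * v 0)) := by
  have hN := integral_bubble_pos m
  set N := ∫ x : 𝔼, (1 + ‖x‖ ^ 2) ^ (-((m : ℝ) + 8) / 2)
  set φ : 𝔼 → ℝ := fun x => N⁻¹ * (1 + ‖x‖ ^ 2) ^ (-((m : ℝ) + 8) / 2)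
  have hφ : ∫ x, φ x = 1 := by rw [integral_const_mul, inv_mul_cancel₀ hN.ne']
  have hdecay : Tendsto (fun x : 𝔼 => ‖x‖ ^ Module.finrank ℝ 𝔼 * φ x)
      (Bornology.cobounded 𝔼) (𝓝 0) := by
    have h := (tendsto_norm_pow_mul_rpow_neg_one_add_norm_sq (E := 𝔼) (d := m + 4)
      (r := m + 8) (by push_cast; linarith)).const_mul N⁻¹
    simpa [φ, mul_left_comm] using h
  have hlim := (tendsto_integral_comp_smul_smul_of_integrable (fun x => by positivity) hφ hdecay
    (g := fun z => cutoff (‖z‖ ^ 2) * v z)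
    (Continuous.integrable_of_hasCompactSupport (by fun_prop) hc.mul_left)
    (Continuous.continuousAt (by fun_prop))).comp tendsto_inv_nhdsGT_zero
  have hscaled := hlim.const_mul N
  simp only [norm_zero, ne_eq, OfNat.ofNat_ne_zero, not_false_eq_true, zero_pow,
    cutoff_eq_one (by norm_num : (0 : ℝ) ≤ 1 / 2), one_mul] at hscaled
  refine hscaled.congr' ?_
  filter_upwards [self_mem_nhdsWithin] with δ hδ
  rw [Function.comp_apply, ← integral_const_mul]
  refine integral_congr_ae (Eventually.of_forall fun z => ?_)
  simp only [φ, finrank_euclideanSpace_fin, smul_eq_mul, ← rescaled_bubble_eq z hδ]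
  field_simp

lemma tendsto_integral_cutoffError {v : 𝔼 → ℝ} (hv : Continuous v) (hc : HasCompactSupport v) :
    Tendsto (fun δ : ℝ => ∫ z : 𝔼, cutoffError m (δ ^ 2) (‖z‖ ^ 2) * v z) (𝓝[>] 0)
      (𝓝 (∫ z : 𝔼, cutoffErrorKernel m z * v z)) := by
  have hcont := continuous_cutoffError m
  obtain ⟨C, hC⟩ := (isCompact_Icc.prod isCompact_Icc :
    IsCompact (Set.Icc (0 : ℝ) 1 ×ˢ Set.Icc (0 : ℝ) 1)).exists_bound_of_continuousOn
      hcont.continuousOn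
  have hC0 : 0 ≤ C := (norm_nonneg _).trans (hC (0, 0) (by simp))
  have hbound {e : ℝ} (he : e ∈ Set.Icc (0 : ℝ) 1) (z : 𝔼) : ‖cutoffError m e (‖z‖ ^ 2)‖ ≤ C := by
    rcases le_total (‖z‖ ^ 2) 1 with h | h
    · exact hC (e, ‖z‖ ^ 2) ⟨he, by positivity, h⟩
    · simpa [cutoffError_eq_zero _ _ h] using hC0
  refine tendsto_integral_filter_of_dominated_convergence (fun z => C * ‖v z‖)
    (Eventually.of_forall fun δ => ?_) ?_
    ((hv.norm.integrable_of_hasCompactSupport hc.norm).const_mul C)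
    (Eventually.of_forall fun z => ?_)
  · have : Continuous fun z : 𝔼 => cutoffError m (δ ^ 2) (‖z‖ ^ 2) :=
      hcont.comp (by fun_prop : Continuous fun z : 𝔼 => (δ ^ 2, ‖z‖ ^ 2))
    exact (this.mul hv).aestronglyMeasurable
  · filter_upwards [Ioo_mem_nhdsGT (zero_lt_one (α := ℝ))] with δ hδ
    refine Eventually.of_forall fun z => ?_
    rw [norm_mul]
    gcongr
    exact hbound ⟨by positivity, pow_le_one₀ hδ.1.le hδ.2.le⟩ z
  · have : Continuous fun δ : ℝ => cutoffError m (δ ^ 2) (‖z‖ ^ 2) :=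
      hcont.comp (by fun_prop : Continuous fun δ : ℝ => (δ ^ 2, ‖z‖ ^ 2))
    exact ((this.tendsto' 0 _ (by simp [cutoffErrorKernel])).mono_left
      nhdsWithin_le_nhds).mul_const _

lemma integral_regularised_mul_bilap {v : 𝔼 → ℝ} (hv : ContDiff ℝ 4 v) (hc : HasCompactSupport v)
    {e : ℝ} (he : 0 < e) :
    ∫ z : 𝔼, cutoff (‖z‖ ^ 2) * (‖z‖ ^ 2 + e) ^ (-(m : ℝ) / 2) * bilap v z
      = m * (m + 2) * (m + 4) * (m + 6) * (∫ z : 𝔼, cutoff (‖z‖ ^ 2) *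
          (e ^ 2 * (‖z‖ ^ 2 + e) ^ (-(m : ℝ) / 2 - 4)) * v z)
        - ∫ z : 𝔼, cutoffError m e (‖z‖ ^ 2) * v z := by
  have hpow (b : ℝ) : ContDiff ℝ 4 (fun z : 𝔼 => (‖z‖ ^ 2 + e) ^ b) :=
    ((contDiff_norm_sq ℝ).add contDiff_const).rpow_const_of_ne fun x => by positivity
  have hcutoff : ContDiff ℝ 4 (fun z : 𝔼 => cutoff (‖z‖ ^ 2)) :=
    (contDiff_cutoff (k := 4)).comp (contDiff_norm_sq ℝ)
  have herror : Continuous fun z : 𝔼 => cutoffError m e (‖z‖ ^ 2) :=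
    (continuous_cutoffError m).comp (by fun_prop : Continuous fun z : 𝔼 => (e, ‖z‖ ^ 2))
  have hmain : Continuous fun z : 𝔼 => cutoff (‖z‖ ^ 2) *
      (e ^ 2 * (‖z‖ ^ 2 + e) ^ (-(m : ℝ) / 2 - 4)) :=
    hcutoff.continuous.mul (continuous_const.mul (hpow _).continuous)
  have hmain_int : Integrable fun z : 𝔼 => m * (m + 2) * (m + 4) * (m + 6) *
      (cutoff (‖z‖ ^ 2) * (e ^ 2 * (‖z‖ ^ 2 + e) ^ (-(m : ℝ) / 2 - 4)) * v z) :=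
    ((hmain.mul hv.continuous).integrable_of_hasCompactSupport hc.mul_left).const_mul _
  have herror_int : Integrable fun z : 𝔼 => cutoffError m e (‖z‖ ^ 2) * v z :=
    (herror.mul hv.continuous).integrable_of_hasCompactSupport hc.mul_left
  rw [integral_mul_bilap (hcutoff.mul (hpow _)) hv hc, ← integral_const_mul,
    ← integral_sub hmain_int herror_int]
  refine integral_congr_ae (Eventually.of_forall fun z => ?_)
  simp only [bilap_cutoff_mul_rpow he z]
  ring

lemma biharmonicConst_mul_eq_of_hasCompactSupport {v : 𝔼 → ℝ} (hv : ContDiff ℝ 4 v)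
    (hc : HasCompactSupport v) :
    biharmonicConst m * v 0 = (∫ z, truncatedRiesz m z * bilap v z)
      + ∫ z, cutoffErrorKernel m z * v z := by
  have two_add_two : (2 : WithTop ℕ∞) + 2 ≤ 4 := by norm_num
  have hcont : Continuous (bilap v) :=
    (contDiff_lap (contDiff_lap hv two_add_two) (zero_add _).le).continuous
  obtain ⟨B, hB⟩ := hcont.bounded_above_of_compact_support
    (hasCompactSupport_lap (hasCompactSupport_lap hc))
  have hriesz := tendsto_integral_regularised_truncatedRiesz (μ := volume) (by simp : m < _)
    hcont.measurable hB
  have hlim := ((tendsto_integral_concentrating_bubble hv.continuous hc).const_mul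
    (m * (m + 2) * (m + 4) * (m + 6) : ℝ)).sub (tendsto_integral_cutoffError hv.continuous hc)
  have heq := tendsto_nhds_unique (hlim.congr' ?_) hriesz
  · rw [biharmonicConst, ← heq]
    ring
  · filter_upwards [self_mem_nhdsWithin] with δ hδ
    exact (integral_regularised_mul_bilap hv hc (pow_pos hδ 2)).symm

lemma exists_contDiff_hasCompactSupport_eventuallyEq {E : Type*} [NormedAddCommGroup E]
    [InnerProductSpace ℝ E] [FiniteDimensional ℝ E] {k : ℕ∞} {w : E → ℝ} {c : E} {r R : ℝ}
    (hr : 0 < r) (hrR : r < R) (hw : ContDiffOn ℝ k w (ball c R)) :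
    ∃ v : E → ℝ, ContDiff ℝ k v ∧ HasCompactSupport v ∧ ∀ z ∈ ball c r, v =ᶠ[𝓝 z] w := by
  let ζ : ContDiffBump c := ⟨r, (r + R) / 2, hr, by linarith⟩
  refine ⟨fun z => ζ z * w z, contDiff_iff_contDiffAt.2 fun x => ?_,
    ζ.hasCompactSupport.mul_right, fun z hz => ?_⟩
  · by_cases hx : x ∈ ball c R
    · exact ζ.contDiff.contDiffAt.mul (hw.contDiffAt (isOpen_ball.mem_nhds hx))
    · have hx' : x ∉ tsupport ζ := fun h => hx (by
        rw [ζ.tsupport_eq] at h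
        exact closedBall_subset_ball (by change (r + R) / 2 < R; linarith) h)
      refine (contDiffAt_const (c := (0 : ℝ))).congr_of_eventuallyEq ?_
      filter_upwards [notMem_tsupport_iff_eventuallyEq.1 hx'] with y hy
      simp [hy]
  · filter_upwards [isOpen_ball.mem_nhds hz] with y hy
    rw [ζ.one_of_mem_closedBall (ball_subset_closedBall hy), one_mul]

theorem biharmonicConst_mul_eq {w : 𝔼 → ℝ} {r : ℝ} (hr : 1 < r)
    (hw : ContDiffOn ℝ 4 w (ball 0 r)) :
    biharmonicConst m * w 0 = (∫ z, truncatedRiesz m z * bilap w z)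
      + ∫ z, cutoffErrorKernel m z * w z := by
  obtain ⟨v, hv, hc, hvw⟩ := exists_contDiff_hasCompactSupport_eventuallyEq (k := 4)
    zero_lt_one hr hw
  rw [← (hvw 0 (by simp)).eq_of_nhds, biharmonicConst_mul_eq_of_hasCompactSupport hv hc]
  congr 1 <;> refine integral_congr_ae (Eventually.of_forall fun z => ?_)
  · by_cases hz : 1 ≤ ‖z‖
    · simp [truncatedRiesz_eq_zero m hz]
    · simp only [bilap_congr_of_eventuallyEq (hvw z (by simpa using hz))]
  · by_cases hz : 1 ≤ ‖z‖
    · simp [cutoffErrorKernel_eq_zero hz]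
    · simp only [(hvw z (by simpa using hz)).eq_of_nhds]

end LocalRepresentation

section Coupling

/-- The nonlinearity `v ↦ |v|^(s-1) v` coupling the equations of the system, on an arbitrary normed
space. -/
noncomputable def coupling {V : Type*} [NormedAddCommGroup V] [NormedSpace ℝ V] (s : ℝ) (v : V) :
    V :=
  ‖v‖ ^ (s - 1) • v

section NormedSpace

variable {V : Type*} [NormedAddCommGroup V] [NormedSpace ℝ V] {s : ℝ}

lemma norm_coupling (hs : s ≠ 0) (v : V) : ‖coupling s v‖ = ‖v‖ ^ s := by
  rw [coupling, norm_smul, Real.norm_of_nonneg (by positivity)]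
  conv_lhs => enter [2]; rw [← Real.rpow_one ‖v‖]
  rw [← Real.rpow_add' (norm_nonneg v) (by simpa using hs), sub_add_cancel]

@[fun_prop]
lemma continuous_coupling (hs : 1 ≤ s) : Continuous (coupling s : V → V) :=
  (continuous_norm.rpow_const fun _ => .inr (sub_nonneg.2 hs)).smul continuous_id

lemma coupling_smul (hs : s ≠ 0) {c : ℝ} (hc : 0 ≤ c) (v : V) :
    coupling s (c • v) = c ^ s • coupling s v := by
  have hcs : c ^ (s - 1) * c = c ^ s := by
    conv_lhs => enter [2]; rw [← Real.rpow_one c]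
    rw [← Real.rpow_add' hc (by simpa using hs), sub_add_cancel]
  rw [coupling, coupling, norm_smul, Real.norm_of_nonneg hc, Real.mul_rpow hc (norm_nonneg v),
    smul_smul, smul_smul, ← hcs]
  ring_nf

lemma rpow_sub_rpow_le (hs : 1 ≤ s) {a b : ℝ} (ha : 0 ≤ a) (hab : a ≤ b) :
    b ^ s - a ^ s ≤ s * b ^ (s - 1) * (b - a) := by
  rcases hab.eq_or_lt with rfl | hab
  · simp
  have hslope := (convexOn_rpow hs).slope_le_of_hasDerivAt (Set.mem_Ici.2 ha)
    (Set.mem_Ici.2 (ha.trans hab.le)) hab (Real.hasDerivAt_rpow_const (.inr hs))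
  rwa [slope_def_field, div_le_iff₀ (sub_pos.2 hab)] at hslope

lemma norm_coupling_sub_le (hs : 1 ≤ s) {v w : V} {M : ℝ} (hv : ‖v‖ ≤ M) (hw : ‖w‖ ≤ M) :
    ‖coupling s v - coupling s w‖ ≤ (1 + s) * M ^ (s - 1) * ‖v - w‖ := by
  wlog hvw : ‖w‖ ≤ ‖v‖ generalizing v w
  · rw [norm_sub_rev, norm_sub_rev v]
    exact this hw hv (le_of_not_ge hvw)
  have hs0 : s ≠ 0 := by positivity
  have hM : 0 ≤ M := (norm_nonneg v).trans hv
  have hpow : ‖v‖ ^ (s - 1) ≤ M ^ (s - 1) := by gcongr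
  have hmono : ‖w‖ ^ (s - 1) ≤ ‖v‖ ^ (s - 1) := by gcongr
  have hsub : ‖v‖ - ‖w‖ ≤ ‖v - w‖ := norm_sub_norm_le v w
  have hmul (u : V) : ‖u‖ ^ (s - 1) * ‖u‖ = ‖u‖ ^ s := by
    rw [← norm_coupling hs0, coupling, norm_smul, Real.norm_of_nonneg (by positivity)]
  have hpart : (‖v‖ ^ (s - 1) - ‖w‖ ^ (s - 1)) * ‖w‖ ≤ s * M ^ (s - 1) * ‖v - w‖ :=
    calc (‖v‖ ^ (s - 1) - ‖w‖ ^ (s - 1)) * ‖w‖ ≤ ‖v‖ ^ s - ‖w‖ ^ s := by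
          rw [sub_mul, hmul, ← hmul v]
          gcongr
      _ ≤ s * ‖v‖ ^ (s - 1) * (‖v‖ - ‖w‖) := rpow_sub_rpow_le hs (norm_nonneg w) hvw
      _ ≤ s * M ^ (s - 1) * ‖v - w‖ := by gcongr
  calc ‖coupling s v - coupling s w‖
      = ‖‖v‖ ^ (s - 1) • (v - w) + (‖v‖ ^ (s - 1) - ‖w‖ ^ (s - 1)) • w‖ := by
        rw [coupling, coupling, smul_sub, sub_smul, sub_add_sub_cancel]
    _ ≤ ‖v‖ ^ (s - 1) * ‖v - w‖ + (‖v‖ ^ (s - 1) - ‖w‖ ^ (s - 1)) * ‖w‖ := by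
        refine (norm_add_le _ _).trans_eq ?_
        rw [norm_smul, norm_smul, Real.norm_of_nonneg (by positivity),
          Real.norm_of_nonneg (sub_nonneg.2 hmono)]
    _ ≤ M ^ (s - 1) * ‖v - w‖ + s * M ^ (s - 1) * ‖v - w‖ := by gcongr
    _ = (1 + s) * M ^ (s - 1) * ‖v - w‖ := by ring

end NormedSpace

section Components

variable {ι : Type*} [Fintype ι] {s : ℝ} {v w : EuclideanSpace ℝ ι}

lemma norm_le_norm_of_forall_abs_le (h : ∀ j, |v j| ≤ |w j|) : ‖v‖ ≤ ‖w‖ := by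
  rw [EuclideanSpace.norm_eq, EuclideanSpace.norm_eq]
  gcongr with j
  exact h j

lemma norm_le_card_mul {B : ℝ} (h : ∀ j, |v j| ≤ B) : ‖v‖ ≤ Fintype.card ι * B := by
  classical
  calc ‖v‖ = ‖∑ j, EuclideanSpace.single j (v j)‖ := by
        congr 1
        ext i
        simp
    _ ≤ ∑ j, |v j| := (norm_sum_le _ _).trans_eq (by simp)
    _ ≤ Fintype.card ι * B := (Finset.sum_le_sum fun j _ => h j).trans_eq (by simp)

lemma coupling_apply (s : ℝ) (v : EuclideanSpace ℝ ι) (i : ι) :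
    coupling s v i = ‖v‖ ^ (s - 1) * v i := rfl

lemma coupling_apply_nonneg (s : ℝ) {i : ι} (hv : 0 ≤ v i) : 0 ≤ coupling s v i :=
  mul_nonneg (by positivity) hv

lemma abs_coupling_apply_le (hs : 0 < s) {B : ℝ} (hv : ‖v‖ ≤ B) (i : ι) :
    |coupling s v i| ≤ B ^ s :=
  calc |coupling s v i| ≤ ‖v‖ ^ s := norm_coupling hs.ne' v ▸ PiLp.norm_apply_le (coupling s v) i
    _ ≤ B ^ s := by gcongr

lemma apply_eq_zero_of_coupling_apply_eq_zero {i : ι} (h : coupling s v i = 0) : v i = 0 := by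
  rcases mul_eq_zero.1 h with h | h
  · by_contra hne
    have : 0 < ‖v‖ := (norm_pos_iff.2 hne).trans_le (PiLp.norm_apply_le v i)
    exact (Real.rpow_pos_of_pos this _).ne' h
  · exact h

lemma coupling_apply_mono (hs : 1 ≤ s) (hv : ∀ j, 0 ≤ v j) (hvw : ∀ j, v j ≤ w j) (i : ι) :
    coupling s v i ≤ coupling s w i := by
  have hnorm : ‖v‖ ≤ ‖w‖ := norm_le_norm_of_forall_abs_le fun j => by
    rw [abs_of_nonneg (hv j), abs_of_nonneg ((hv j).trans (hvw j))]
    exact hvw j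
  rw [coupling_apply, coupling_apply]
  gcongr
  · exact hv i
  · exact hvw i

lemma apply_le_add_mul_coupling_apply (hs : 1 ≤ s) {i : ι} (hv : 0 ≤ v i) {e : ℝ} (he : 0 < e) :
    v i ≤ e + (e ^ (s - 1))⁻¹ * coupling s v i := by
  have hcoup := coupling_apply_nonneg s hv
  rcases le_or_gt (v i) e with h | h
  · have : 0 ≤ (e ^ (s - 1))⁻¹ * coupling s v i := by positivity
    linarith
  · have hpow : e ^ (s - 1) ≤ ‖v‖ ^ (s - 1) := by
      gcongr
      exact h.le.trans ((le_abs_self _).trans (PiLp.norm_apply_le v i))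
    have : v i ≤ (e ^ (s - 1))⁻¹ * coupling s v i := by
      rw [le_inv_mul_iff₀ (by positivity), coupling_apply]
      gcongr
    linarith

lemma exists_coupling_apply_le_add (ι : Type*) [Fintype ι] (hs : 1 ≤ s) {B : ℝ} (hB : 0 ≤ B) :
    ∃ L, 0 ≤ L ∧ ∀ (v w : EuclideanSpace ℝ ι) (W : ℝ), 0 ≤ W → (∀ j, v j ∈ Set.Icc 0 B) →
      (∀ j, w j ∈ Set.Icc 0 B) → (∀ j, w j ≤ v j + W) →
      ∀ i, coupling s w i ≤ coupling s v i + L * W := by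
  refine ⟨(1 + s) * (Fintype.card ι * B) ^ (s - 1) * Fintype.card ι, by positivity,
    fun v w W hW hv hw hvw i => ?_⟩
  let u : EuclideanSpace ℝ ι := WithLp.toLp 2 fun j => max (v j) (w j)
  have hu (j : ι) : u j = max (v j) (w j) := rfl
  have hle : coupling s w i ≤ coupling s u i :=
    coupling_apply_mono hs (fun j => (hw j).1) (fun j => le_max_right _ _) i
  have hv_norm : ‖v‖ ≤ Fintype.card ι * B := norm_le_card_mul fun j => by
    rw [abs_of_nonneg (hv j).1]
    exact (hv j).2
  have hu_norm : ‖u‖ ≤ Fintype.card ι * B := norm_le_card_mul fun j => by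
    rw [hu, abs_of_nonneg ((hv j).1.trans (le_max_left _ _))]
    exact max_le (hv j).2 (hw j).2
  have huv : ‖u - v‖ ≤ Fintype.card ι * W := norm_le_card_mul fun j => by
    rw [PiLp.sub_apply, hu, abs_of_nonneg (sub_nonneg.2 (le_max_left _ _)), sub_le_iff_le_add']
    exact max_le (by linarith) (hvw j)
  have hdiff : coupling s u i - coupling s v i ≤
      (1 + s) * (Fintype.card ι * B) ^ (s - 1) * (Fintype.card ι * W) :=
    calc coupling s u i - coupling s v i ≤ ‖coupling s u - coupling s v‖ :=
          (le_abs_self _).trans (PiLp.norm_apply_le (coupling s u - coupling s v) i)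
      _ ≤ _ := norm_coupling_sub_le hs hu_norm hv_norm
      _ ≤ _ := by gcongr
  linarith

end Components

end Coupling

section BlowUp

lemma exists_doubling_ball {E : Type*} [SeminormedAddCommGroup E] [ProperSpace E] {f : E → ℝ}
    (hf : ContinuousOn f (ball 0 1)) {γ M : ℝ} (hγ : 0 < γ) (hM : 0 ≤ M) {x₀ : E}
    (hx₀ : x₀ ∈ ball (0 : E) 1) (h : M < f x₀ * (1 - ‖x₀‖) ^ γ) :
    ∃ a d, 0 < d ∧ ‖a‖ + d ≤ 1 ∧ M < f a * d ^ γ ∧ ∀ x ∈ ball a (d / 2), f x ≤ 2 ^ γ * f a := by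
  rw [mem_ball_zero_iff] at hx₀
  obtain ⟨r, hr, hxr, hr1⟩ : ∃ r, M < f x₀ * (r - ‖x₀‖) ^ γ ∧ ‖x₀‖ < r ∧ r < 1 := by
    have hcont : Continuous fun r : ℝ => f x₀ * (r - ‖x₀‖) ^ γ :=
      continuous_const.mul ((continuous_id.sub continuous_const).rpow_const fun _ => .inr hγ.le)
    have hmem := ((hcont.tendsto 1).eventually (lt_mem_nhds h)).and (lt_mem_nhds hx₀)
    obtain ⟨r, hr, hr1⟩ := ((hmem.filter_mono nhdsWithin_le_nhds).and
      (self_mem_nhdsWithin (s := Set.Iio (1 : ℝ)))).exists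
    exact ⟨r, hr.1, hr.2, hr1⟩
  have hcont : ContinuousOn (fun x => f x * (r - ‖x‖) ^ γ) (closedBall 0 r) :=
    (hf.mono (closedBall_subset_ball hr1)).mul
      (ContinuousOn.rpow_const (by fun_prop) fun _ _ => .inr hγ.le)
  obtain ⟨a, ha, hmax⟩ := (isCompact_closedBall (0 : E) r).exists_isMaxOn
    ⟨x₀, by simpa using hxr.le⟩ hcont
  have hMa : M < f a * (r - ‖a‖) ^ γ := hr.trans_le (hmax (by simpa using hxr.le))
  have har : ‖a‖ < r := by
    refine lt_of_le_of_ne (by simpa using ha) fun h => ?_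
    rw [h, sub_self, Real.zero_rpow hγ.ne', mul_zero] at hMa
    exact hM.not_gt hMa
  have hd : 0 < r - ‖a‖ := sub_pos.2 har
  have hfa : 0 < f a := pos_of_mul_pos_left (hM.trans_lt hMa) (by positivity)
  refine ⟨a, r - ‖a‖, hd, by linarith, hMa, fun x hx => ?_⟩
  rcases le_or_gt (f x) 0 with hfx | hfx
  · exact hfx.trans (by positivity)
  have hxa : ‖x‖ < ‖a‖ + (r - ‖a‖) / 2 := by
    rw [mem_ball, dist_eq_norm] at hx
    linarith [norm_le_norm_add_norm_sub a x, norm_sub_rev a x]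
  have hhalf : f x * ((r - ‖a‖) / 2) ^ γ ≤ f a * (r - ‖a‖) ^ γ :=
    calc f x * ((r - ‖a‖) / 2) ^ γ ≤ f x * (r - ‖x‖) ^ γ := by gcongr; linarith
      _ ≤ _ := hmax (by rw [mem_closedBall_zero_iff]; linarith)
  rwa [Real.div_rpow hd.le (by norm_num), mul_div_assoc', div_le_iff₀ (by positivity),
    mul_right_comm, mul_le_mul_iff_left₀ (by positivity), mul_comm] at hhalf

variable {n : ℕ} {ι : Type*} [Fintype ι]

local notation "𝔼" => EuclideanSpace ℝ (Fin n)

/-- `U` is a nonnegative classical solution of the system `Δ² Uᵢ = |U|^(s-1) Uᵢ` on the open ball of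
radius `r` around the origin. The `p`-map is encoded as a single function with values in a Euclidean
space, so that `|U|` is the norm. -/
structure IsNonnegSolutionOnBall (s : ℝ) (U : 𝔼 → EuclideanSpace ℝ ι) (r : ℝ) : Prop where
  nonneg : ∀ x ∈ ball (0 : 𝔼) r, ∀ i, 0 ≤ U x i
  contDiffOn : ContDiffOn ℝ 4 U (ball 0 r)
  bilap_eq : ∀ x ∈ ball (0 : 𝔼) r, ∀ i, bilap (fun y => U y i) x = coupling s (U x) i

namespace IsNonnegSolutionOnBall

variable {s r : ℝ} {U : EuclideanSpace ℝ (Fin n) → EuclideanSpace ℝ ι}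

lemma rescale (hU : IsNonnegSolutionOnBall s U r) (hs : 1 < s) {l R : ℝ} (hl : 0 < l) {a : 𝔼}
    (ha : Set.MapsTo (fun y => a + l • y) (ball 0 R) (ball 0 r)) :
    IsNonnegSolutionOnBall s (fun y => l ^ (4 / (s - 1)) • U (a + l • y)) R where
  nonneg x hx i := mul_nonneg (by positivity) (hU.nonneg _ (ha hx) i)
  contDiffOn := (hU.contDiffOn.comp (by fun_prop) ha).const_smul _
  bilap_eq x hx i := by
    have hexp : 4 / (s - 1) * s = 4 / (s - 1) + (4 : ℕ) := by
      have : s - 1 ≠ 0 := by linarith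
      field_simp
      ring
    have hbilap := bilap_const_mul_comp_affine (fun y => U y i) (l ^ (4 / (s - 1))) l a x
    simp only [PiLp.smul_apply, smul_eq_mul]
    rw [hbilap, hU.bilap_eq _ (ha hx), coupling_smul (by linarith) (by positivity),
      ← Real.rpow_mul hl.le, hexp, Real.rpow_add_natCast hl.ne', PiLp.smul_apply, smul_eq_mul]

lemma exists_rescaled_solution (hU : IsNonnegSolutionOnBall s U 1) (hs : 1 < s) {x₀ : 𝔼}
    (hx₀ : x₀ ∈ ball (0 : 𝔼) 1) {R : ℝ} (hR : 0 < R)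
    (h : (2 * R) ^ (4 / (s - 1)) < ‖U x₀‖ * (1 - ‖x₀‖) ^ (4 / (s - 1))) :
    ∃ V : 𝔼 → EuclideanSpace ℝ ι, IsNonnegSolutionOnBall s V R ∧
      (∀ x ∈ ball 0 R, ‖V x‖ ≤ 2 ^ (4 / (s - 1))) ∧ ‖V 0‖ = 1 := by
  set γ := 4 / (s - 1)
  have hγ : 0 < γ := div_pos (by norm_num) (by linarith)
  obtain ⟨a, d, hd, had, hfa, hdouble⟩ :=
    exists_doubling_ball hU.contDiffOn.continuousOn.norm hγ (by positivity) hx₀ h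
  have hA : 0 < ‖U a‖ := pos_of_mul_pos_left ((by positivity : 0 ≤ (2 * R) ^ γ).trans_lt hfa)
    (by positivity)
  set l := ‖U a‖ ^ (-γ⁻¹)
  have hl : 0 < l := by positivity
  have hlγ : l ^ γ = ‖U a‖⁻¹ := by
    rw [← Real.rpow_mul hA.le, neg_mul, inv_mul_cancel₀ hγ.ne', Real.rpow_neg_one]
  have hlR : l * R < d / 2 := by
    suffices 2 * R * l < d by linarith
    rwa [← Real.rpow_lt_rpow_iff (by positivity) hd.le hγ, Real.mul_rpow (by positivity) hl.le,
      hlγ, ← div_eq_mul_inv, div_lt_iff₀ hA, mul_comm (d ^ γ)]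
  have hmaps : Set.MapsTo (fun y => a + l • y) (ball 0 R) (ball a (d / 2)) := fun y hy => by
    rw [mem_ball_zero_iff] at hy
    rw [mem_ball, dist_self_add_left, norm_smul, Real.norm_of_nonneg hl.le]
    exact (mul_le_mul_of_nonneg_left hy.le hl.le).trans_lt hlR
  have hsub : ball a (d / 2) ⊆ ball 0 1 :=
    ball_subset_ball' (by rw [dist_zero_right]; linarith)
  have hnorm (y : 𝔼) : ‖l ^ γ • U (a + l • y)‖ = ‖U a‖⁻¹ * ‖U (a + l • y)‖ := by
    rw [norm_smul, hlγ, norm_inv, norm_norm]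
  refine ⟨_, hU.rescale hs hl (hmaps.mono_right hsub), fun x hx => ?_, ?_⟩
  · rw [hnorm, inv_mul_le_iff₀ hA, mul_comm]
    exact hdouble _ (hmaps hx)
  · rw [hnorm, smul_zero, add_zero, inv_mul_cancel₀ hA.ne']

end IsNonnegSolutionOnBall

end BlowUp

section Compactness

section Translation

variable {E : Type*} [NormedAddCommGroup E] [MeasurableSpace E] [BorelSpace E] {μ : Measure E}
  [μ.IsAddHaarMeasure] {f : E → ℝ}

lemma tendsto_integral_abs_comp_add_right_sub [ProperSpace E] (hf : Integrable f μ) :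
    Tendsto (fun h => ∫ z, |f (z + h) - f z| ∂μ) (𝓝 0) (𝓝 0) := by
  have : Fact ((1 : ENNReal) ≠ ⊤) := ⟨ENNReal.one_ne_top⟩
  have hvadd_cont : Continuous fun h : E => DomAddAct.mk h +ᵥ hf.toL1 f :=
    Continuous.vadd (f := DomAddAct.mk) DomAddAct.continuous_mk continuous_const
  have hcont : Continuous fun h : E => ‖(DomAddAct.mk h +ᵥ hf.toL1 f) - hf.toL1 f‖ :=
    (hvadd_cont.sub (continuous_const (y := hf.toL1 f))).norm
  have hnorm (h : E) : ‖(DomAddAct.mk h +ᵥ hf.toL1 f) - hf.toL1 f‖ =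
      ∫ z, |f (z + h) - f z| ∂μ := by
    have hvadd : DomAddAct.mk h +ᵥ hf.toL1 f = (hf.comp_add_left h).toL1 _ := rfl
    rw [hvadd, ← Integrable.toL1_sub, L1.norm_of_fun_eq_integral_norm]
    simp only [Pi.sub_apply, Real.norm_eq_abs, add_comm]
  have hzero := hcont.tendsto 0
  simp only [hnorm, add_zero, sub_self, abs_zero, integral_zero] at hzero
  exact hzero

lemma abs_integral_mul_comp_add_left_sub_le (hf : Integrable f μ) {H : E → ℝ} (hH : Measurable H)
    {C : ℝ} (hC : ∀ x, |H x| ≤ C) (y y' : E) :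
    |(∫ z, f z * H (y + z) ∂μ) - ∫ z, f z * H (y' + z) ∂μ| ≤
      C * ∫ z, |f (z + (y - y')) - f z| ∂μ := by
  have hshift : ∫ z, f z * H (y' + z) ∂μ = ∫ z, f (z + (y - y')) * H (y + z) ∂μ := by
    rw [← integral_add_right_eq_self _ (y - y')]
    refine integral_congr_ae (.of_forall fun z => ?_)
    simp only
    congr 2
    abel
  have hHy : Measurable fun z => H (y + z) := by fun_prop
  have hint {k : E → ℝ} (hk : Integrable k μ) : Integrable (fun z => k z * H (y + z)) μ :=
    hk.mul_bdd (c := C) hHy.aestronglyMeasurable (.of_forall fun z => hC _)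
  have hf' : Integrable (fun z => f (z + (y - y'))) μ := hf.comp_add_right _
  rw [hshift, ← integral_sub (hint hf) (hint hf'), ← integral_const_mul, ← Real.norm_eq_abs]
  refine norm_integral_le_of_norm_le ((hf'.sub hf).abs.const_mul C) (.of_forall fun z => ?_)
  rw [Real.norm_eq_abs, ← sub_mul, abs_mul, abs_sub_comm, mul_comm]
  exact mul_le_mul_of_nonneg_right (hC _) (abs_nonneg _)

end Translation

lemma exists_subseq_tendsto_of_eventually_equicontinuous {X Y : Type*} [TopologicalSpace X]
    [TopologicalSpace.SeparableSpace X] [Nonempty X] [MetricSpace Y] {K : Set Y} (hK : IsCompact K)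
    {f : ℕ → X → Y} (hf : ∀ k x, f k x ∈ K)
    (hequi : ∀ y, ∀ ε > 0, ∀ᶠ x in 𝓝 y, ∀ᶠ k in atTop, dist (f k x) (f k y) < ε) :
    ∃ φ : ℕ → ℕ, StrictMono φ ∧ ∃ g : X → Y, Continuous g ∧
      ∀ x, Tendsto (fun k => f (φ k) x) atTop (𝓝 (g x)) := by
  let q := TopologicalSpace.denseSeq X
  obtain ⟨L, -, φ, hφ, hL⟩ := (isCompact_univ_pi fun _ : ℕ => hK).tendsto_subseq
    (x := fun k j => f k (q j)) fun k j _ => hf k (q j)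
  rw [tendsto_pi_nhds] at hL
  have hlim (y : X) : ∃ l, Tendsto (fun k => f (φ k) y) atTop (𝓝 l) := by
    have hcauchy : CauchySeq fun k => f (φ k) y := by
      refine Metric.cauchySeq_iff'.2 fun ε hε => ?_
      obtain ⟨_, ⟨j, rfl⟩, hx⟩ := (TopologicalSpace.denseRange_denseSeq X).inter_nhds_nonempty
        (hequi y (ε / 4) (by positivity))
      obtain ⟨N, hN⟩ := eventually_atTop.1 ((hφ.tendsto_atTop.eventually hx).and
        ((hL j).eventually (ball_mem_nhds _ (by positivity : 0 < ε / 4))))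
      refine ⟨N, fun k hk => ?_⟩
      have htri := dist_triangle4_left (f (φ k) (q j)) (f (φ N) (q j)) (f (φ k) y) (f (φ N) y)
      have hmid := dist_triangle_right (f (φ k) (q j)) (f (φ N) (q j)) (L j)
      have hclose {k : ℕ} (hk : N ≤ k) :
          dist (f (φ k) (q j)) (f (φ k) y) < ε / 4 ∧ dist (f (φ k) (q j)) (L j) < ε / 4 := hN k hk
      linarith [(hclose hk).1, (hclose hk).2, (hclose le_rfl).1, (hclose le_rfl).2]
    obtain ⟨l, -, hl⟩ := cauchySeq_tendsto_of_isComplete hK.isComplete (fun k => hf (φ k) y) hcauchy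
    exact ⟨l, hl⟩
  choose g hg using hlim
  refine ⟨φ, hφ, g, continuous_iff_continuousAt.2 fun y => Metric.tendsto_nhds.2 fun ε hε => ?_, hg⟩
  filter_upwards [hequi y (ε / 2) (by positivity)] with x hx
  have hle : dist (g x) (g y) ≤ ε / 2 := le_of_tendsto ((hg x).dist (hg y))
    ((hφ.tendsto_atTop.eventually hx).mono fun k hk => hk.le)
  linarith

section IntegralSystem

variable {m : ℕ} {ι : Type*} [Fintype ι]

local notation "𝔼" => EuclideanSpace ℝ (Fin (m + 4))

lemma integrable_cutoffErrorKernel : Integrable (cutoffErrorKernel m) := by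
  refine continuous_cutoffErrorKernel.integrable_of_hasCompactSupport
    (.intro (isCompact_closedBall 0 1) fun z hz => cutoffErrorKernel_eq_zero ?_)
  rw [mem_closedBall_zero_iff, not_le] at hz
  exact hz.le

/-- `V` is nonnegative, bounded by `B`, and satisfies at every scale `ρ` the local integral form of
the system `Δ² Vᵢ = |V|^(s-1) Vᵢ` on balls of radius `ρ` inside the ball of radius `R`. Unlike the
differential system, this notion passes to bounded pointwise limits. -/
structure LocalIntegralSystem (m : ℕ) (s B R : ℝ)
    (V : EuclideanSpace ℝ (Fin (m + 4)) → EuclideanSpace ℝ ι) : Prop where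
  measurable : Measurable V
  nonneg : ∀ x i, 0 ≤ V x i
  norm_le : ∀ x, ‖V x‖ ≤ B
  eqn : ∀ i y ρ, 0 < ρ → ‖y‖ + ρ < R → biharmonicConst m * V y i =
    ρ ^ 4 * (∫ z, truncatedRiesz m z * coupling s (V (y + ρ • z)) i) +
      ∫ z, cutoffErrorKernel m z * V (y + ρ • z) i

variable {s B R : ℝ} {V : EuclideanSpace ℝ (Fin (m + 4)) → EuclideanSpace ℝ ι}

lemma IsNonnegSolutionOnBall.localIntegral_eq (hV : IsNonnegSolutionOnBall s V R) (i : ι) {y : 𝔼}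
    {ρ : ℝ} (hρ : 0 < ρ) (hy : ‖y‖ + ρ < R) :
    biharmonicConst m * V y i =
      (∫ z, truncatedRiesz m z * bilap (fun z => V (y + ρ • z) i) z) +
        ∫ z, cutoffErrorKernel m z * V (y + ρ • z) i := by
  have hmaps : Set.MapsTo (fun z => y + ρ • z) (ball (0 : 𝔼) ((R - ‖y‖) / ρ)) (ball 0 R) := by
    intro z hz
    rw [mem_ball_zero_iff, lt_div_iff₀ hρ] at hz
    rw [mem_ball_zero_iff]
    calc ‖y + ρ • z‖ ≤ ‖y‖ + ‖z‖ * ρ := (norm_add_le _ _).trans_eq (by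
          rw [norm_smul, Real.norm_of_nonneg hρ.le, mul_comm])
      _ < R := by linarith
  have hsmooth : ContDiffOn ℝ 4 (fun z => V (y + ρ • z) i) (ball (0 : 𝔼) ((R - ‖y‖) / ρ)) :=
    (contDiffOn_euclidean.1 hV.contDiffOn i).comp (by fun_prop) hmaps
  have hr : 1 < (R - ‖y‖) / ρ := by rw [lt_div_iff₀ hρ]; linarith
  simpa using biharmonicConst_mul_eq hr hsmooth

lemma IsNonnegSolutionOnBall.localIntegralSystem (hV : IsNonnegSolutionOnBall s V R)
    (hVB : ∀ x ∈ ball 0 R, ‖V x‖ ≤ B) (hB : 0 ≤ B) :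
    LocalIntegralSystem m s B R ((ball 0 R).indicator V) where
  measurable := by
    classical
    rw [← Set.piecewise_eq_indicator]
    exact hV.contDiffOn.continuousOn.measurable_piecewise continuousOn_const measurableSet_ball
  nonneg x i := by
    by_cases hx : x ∈ ball (0 : 𝔼) R
    · simpa only [Set.indicator_of_mem hx] using hV.nonneg x hx i
    · simp [Set.indicator_of_notMem hx]
  norm_le x := by
    rw [norm_indicator_eq_indicator_norm]
    exact Set.indicator_apply_le' (hVB x) fun _ => hB
  eqn i y ρ hρ hy := by
    have hmem {z : 𝔼} (hz : ‖z‖ < 1) : y + ρ • z ∈ ball (0 : 𝔼) R := by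
      rw [mem_ball_zero_iff]
      calc ‖y + ρ • z‖ ≤ ‖y‖ + ρ * ‖z‖ := (norm_add_le _ _).trans_eq (by
            rw [norm_smul, Real.norm_of_nonneg hρ.le])
        _ < R := by nlinarith
    have hyR : y ∈ ball (0 : 𝔼) R := by simpa using hmem (z := 0) (by simp)
    rw [Set.indicator_of_mem hyR, hV.localIntegral_eq i hρ hy, ← integral_const_mul]
    congr 1
    · refine integral_congr_ae (.of_forall fun z => ?_)
      rcases lt_or_ge ‖z‖ 1 with hz | hz
      · have hbilap := bilap_const_mul_comp_affine (fun x => V x i) 1 ρ y z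
        simp only [one_mul] at hbilap
        simp only [Set.indicator_of_mem (hmem hz), hbilap, hV.bilap_eq _ (hmem hz)]
        ring
      · simp [truncatedRiesz_eq_zero m hz]
    · refine integral_congr_ae (.of_forall fun z => ?_)
      rcases lt_or_ge ‖z‖ 1 with hz | hz
      · simp only [Set.indicator_of_mem (hmem hz)]
      · simp [cutoffErrorKernel_eq_zero hz]

/-- A modulus of continuity at scale one for the solutions bounded by `B` of the local integral
system. -/
noncomputable def localModulus (m : ℕ) (s B : ℝ) (h : EuclideanSpace ℝ (Fin (m + 4))) : ℝ :=
  B ^ s * (∫ z : EuclideanSpace ℝ (Fin (m + 4)), |truncatedRiesz m (z + h) - truncatedRiesz m z|) +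
    B * ∫ z, |cutoffErrorKernel m (z + h) - cutoffErrorKernel m z|

variable (m s B) in
lemma tendsto_localModulus : Tendsto (localModulus m s B) (𝓝 0) (𝓝 0) := by
  have hriesz := (tendsto_integral_abs_comp_add_right_sub (μ := volume)
    (integrable_truncatedRiesz (E := 𝔼) (m := m) (by simp))).const_mul (B ^ s)
  have herror := (tendsto_integral_abs_comp_add_right_sub
    (integrable_cutoffErrorKernel (m := m))).const_mul B
  have hsum := hriesz.add herror
  rw [mul_zero, mul_zero, add_zero] at hsum
  exact hsum

namespace LocalIntegralSystem

lemma abs_apply_le (hV : LocalIntegralSystem m s B R V) (x : 𝔼) (i : ι) : |V x i| ≤ B :=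
  (PiLp.norm_apply_le (V x) i).trans (hV.norm_le x)

lemma measurable_apply (hV : LocalIntegralSystem m s B R V) (i : ι) : Measurable fun x => V x i :=
  (PiLp.continuous_apply 2 _ i).measurable.comp hV.measurable

lemma measurable_coupling_apply (hV : LocalIntegralSystem m s B R V) (hs : 1 ≤ s) (i : ι) :
    Measurable fun x => coupling s (V x) i :=
  (PiLp.continuous_apply 2 _ i).measurable.comp
    ((continuous_coupling hs).measurable.comp hV.measurable)

lemma dist_le (hV : LocalIntegralSystem m s B R V) (hm : 0 < m) (hs : 1 ≤ s)
    {y y' : 𝔼} (hy : ‖y‖ + 1 < R) (hy' : ‖y'‖ + 1 < R) :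
    biharmonicConst m * dist (V y) (V y') ≤ Fintype.card ι * localModulus m s B (y - y') := by
  rw [dist_eq_norm, ← Real.norm_of_nonneg (biharmonicConst_pos hm).le, ← norm_smul]
  refine norm_le_card_mul fun i => ?_
  have hriesz := abs_integral_mul_comp_add_left_sub_le (μ := volume)
    (integrable_truncatedRiesz (E := 𝔼) (m := m) (by simp)) (hV.measurable_coupling_apply hs i)
    (fun x => abs_coupling_apply_le (by linarith) (hV.norm_le x) i) y y'
  have herror := abs_integral_mul_comp_add_left_sub_le integrable_cutoffErrorKernel
    (hV.measurable_apply i) (hV.abs_apply_le · i) y y'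
  simp only [PiLp.smul_apply, PiLp.sub_apply, smul_eq_mul, mul_sub]
  rw [hV.eqn i y 1 one_pos hy, hV.eqn i y' 1 one_pos hy']
  simp only [one_pow, one_mul, one_smul]
  rw [add_sub_add_comm]
  exact (abs_add_le _ _).trans (add_le_add hriesz herror)

lemma of_tendsto {R : ℕ → ℝ} {V : ℕ → 𝔼 → EuclideanSpace ℝ ι} {U : 𝔼 → EuclideanSpace ℝ ι}
    (hs : 1 ≤ s) (hV : ∀ k, LocalIntegralSystem m s B (R k) (V k)) (hR : Tendsto R atTop atTop)
    (hU : ∀ x, Tendsto (fun k => V k x) atTop (𝓝 (U x))) (r : ℝ) :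
    LocalIntegralSystem m s B r U := by
  have hUi (x : 𝔼) (i : ι) : Tendsto (fun k => V k x i) atTop (𝓝 (U x i)) :=
    ((PiLp.continuous_apply 2 _ i).tendsto _).comp (hU x)
  have hUcoupling (x : 𝔼) (i : ι) :
      Tendsto (fun k => coupling s (V k x) i) atTop (𝓝 (coupling s (U x) i)) :=
    (((PiLp.continuous_apply 2 _ i).comp (continuous_coupling hs)).tendsto _).comp (hU x)
  have hmeas (k : ℕ) := (hV k).measurable
  refine ⟨measurable_of_tendsto_metrizable hmeas (tendsto_pi_nhds.2 hU),
    fun x i => ge_of_tendsto' (hUi x i) fun k => (hV k).nonneg x i,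
    fun x => le_of_tendsto' (hU x).norm fun k => (hV k).norm_le x, fun i y ρ hρ _ => ?_⟩
  have hriesz : Tendsto (fun k => ∫ z : 𝔼, truncatedRiesz m z * coupling s (V k (y + ρ • z)) i)
      atTop (𝓝 (∫ z, truncatedRiesz m z * coupling s (U (y + ρ • z)) i)) := by
    refine tendsto_integral_of_dominated_convergence (fun z => truncatedRiesz m z * B ^ s)
      (fun k => ?_) ((integrable_truncatedRiesz (by simp)).mul_const _)
      (fun k => .of_forall fun z => ?_) (.of_forall fun z => (hUcoupling _ i).const_mul _)
    · exact ((measurable_truncatedRiesz m).mul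
        (((hV k).measurable_coupling_apply hs i).comp (by fun_prop))).aestronglyMeasurable
    · rw [norm_mul, Real.norm_of_nonneg (truncatedRiesz_nonneg m z)]
      exact mul_le_mul_of_nonneg_left (abs_coupling_apply_le (by linarith) ((hV k).norm_le _) i)
        (truncatedRiesz_nonneg m z)
  have herror : Tendsto (fun k => ∫ z, cutoffErrorKernel m z * V k (y + ρ • z) i) atTop
      (𝓝 (∫ z, cutoffErrorKernel m z * U (y + ρ • z) i)) := by
    refine tendsto_integral_of_dominated_convergence (fun z => |cutoffErrorKernel m z| * B)
      (fun k => ?_) (integrable_cutoffErrorKernel.abs.mul_const _)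
      (fun k => .of_forall fun z => ?_) (.of_forall fun z => (hUi _ i).const_mul _)
    · exact (continuous_cutoffErrorKernel.measurable.mul
        (((hV k).measurable_apply i).comp (by fun_prop))).aestronglyMeasurable
    · rw [norm_mul, Real.norm_eq_abs]
      exact mul_le_mul_of_nonneg_left ((hV k).abs_apply_le _ i) (abs_nonneg _)
  refine tendsto_nhds_unique ((hUi y i).const_mul _)
    (((hriesz.const_mul (ρ ^ 4)).add herror).congr' ?_)
  filter_upwards [hR.eventually_gt_atTop (‖y‖ + ρ)] with k hk
  exact ((hV k).eqn i y ρ hρ hk).symm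

theorem exists_entire_limit (hm : 0 < m) (hs : 1 ≤ s) {R : ℕ → ℝ} {V : ℕ → 𝔼 → EuclideanSpace ℝ ι}
    (hV : ∀ k, LocalIntegralSystem m s B (R k) (V k)) (hR : Tendsto R atTop atTop) {c : ℝ}
    (hV0 : ∀ k, ‖V k 0‖ = c) :
    ∃ U : 𝔼 → EuclideanSpace ℝ ι, Continuous U ∧ (∀ r, LocalIntegralSystem m s B r U) ∧
      ‖U 0‖ = c := by
  have hκ := biharmonicConst_pos hm
  have hequi (y : 𝔼) (ε : ℝ) (hε : 0 < ε) :
      ∀ᶠ x in 𝓝 y, ∀ᶠ k in atTop, dist (V k x) (V k y) < ε := by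
    have hmod : Tendsto (fun x => Fintype.card ι * localModulus m s B (x - y)) (𝓝 y) (𝓝 0) := by
      have hsub : Tendsto (fun x => x - y) (𝓝 y) (𝓝 0) :=
        Continuous.tendsto' (by fun_prop) _ _ (sub_self y)
      simpa only [Function.comp_apply, mul_zero] using
        ((tendsto_localModulus m s B).comp hsub).const_mul (Fintype.card ι : ℝ)
    filter_upwards [hmod.eventually_lt_const (mul_pos hκ hε)] with x hx
    filter_upwards [hR.eventually_gt_atTop (‖x‖ + 1), hR.eventually_gt_atTop (‖y‖ + 1)]
      with k hxk hyk
    exact lt_of_mul_lt_mul_left (((hV k).dist_le hm hs hxk hyk).trans_lt hx) hκ.le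
  obtain ⟨φ, hφ, U, hUcont, hU⟩ := exists_subseq_tendsto_of_eventually_equicontinuous
    (isCompact_closedBall (0 : EuclideanSpace ℝ ι) B)
    (fun k x => mem_closedBall_zero_iff.2 ((hV k).norm_le x)) hequi
  refine ⟨U, hUcont, of_tendsto hs (fun k => hV (φ k)) (hR.comp hφ.tendsto_atTop) hU, ?_⟩
  exact tendsto_nhds_unique (hU 0).norm (tendsto_const_nhds.congr fun k => (hV0 (φ k)).symm)

end LocalIntegralSystem

end IntegralSystem

end Compactness

section RieszPotential

variable {E : Type*} [NormedAddCommGroup E] [NormedSpace ℝ E]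

lemma cutoff_norm_inv_smul_sq_eq_one {ρ : ℝ} (hρ : 0 < ρ) {z : E} (hz : 2 * ‖z‖ ≤ ρ) :
    cutoff (‖ρ⁻¹ • z‖ ^ 2) = 1 := by
  have hle : ρ⁻¹ * ‖z‖ ≤ 1 / 2 := by
    rw [inv_mul_le_iff₀ hρ]
    linarith
  have hnonneg : 0 ≤ ρ⁻¹ * ‖z‖ := by positivity
  rw [norm_smul, norm_inv, Real.norm_of_nonneg hρ.le]
  exact cutoff_eq_one (by nlinarith)

lemma cutoff_norm_inv_smul_sq_eq_zero {ρ : ℝ} (hρ : 0 < ρ) {z : E} (hz : ρ ≤ ‖z‖) :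
    cutoff (‖ρ⁻¹ • z‖ ^ 2) = 0 := by
  refine cutoff_eq_zero (one_le_pow₀ ?_)
  rwa [norm_smul, norm_inv, Real.norm_of_nonneg hρ.le, inv_mul_eq_div, one_le_div hρ]

variable [MeasurableSpace E] [BorelSpace E] {μ : Measure E} {g : E → ℝ}

lemma integrable_cutoff_mul {ρ : ℝ} (hρ : 0 < ρ) (hg : IntegrableOn g (ball 0 ρ) μ) :
    Integrable (fun z => cutoff (‖ρ⁻¹ • z‖ ^ 2) * g z) μ := by
  rw [← integrableOn_iff_integrable_of_support_subset (s := ball 0 ρ)]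
  · have hcutoff : Measurable fun z : E => cutoff (‖ρ⁻¹ • z‖ ^ 2) := by fun_prop
    refine hg.bdd_mul (c := 1) hcutoff.aestronglyMeasurable (.of_forall fun z => ?_)
    rw [Real.norm_of_nonneg (cutoff_nonneg _)]
    exact cutoff_le_one _
  · intro z hz
    by_contra h
    refine hz ?_
    simp only [cutoff_norm_inv_smul_sq_eq_zero hρ (by simpa using h : ρ ≤ ‖z‖), zero_mul]

lemma integrable_of_integral_cutoff_mul_le (hg : ∀ r, IntegrableOn g (ball 0 r) μ)
    (hg0 : ∀ z, 0 ≤ g z) {C : ℝ}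
    (hC : ∀ ρ : ℝ, 0 < ρ → ∫ z, cutoff (‖ρ⁻¹ • z‖ ^ 2) * g z ∂μ ≤ C) :
    Integrable g μ := by
  refine (aecover_ball (μ := μ) (x := (0 : E)) tendsto_id).integrable_of_integral_norm_bounded
    C hg ?_
  filter_upwards [eventually_gt_atTop (0 : ℝ)] with r hr
  refine le_trans ?_ (hC (2 * r) (by positivity))
  rw [← integral_indicator measurableSet_ball]
  refine integral_mono ((integrable_indicator_iff measurableSet_ball).2 (hg r).norm)
    (integrable_cutoff_mul (by positivity) (hg _)) fun z => ?_
  refine Set.indicator_apply_le' (fun hz => ?_) fun _ => mul_nonneg (cutoff_nonneg _) (hg0 z)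
  rw [id_eq, mem_ball_zero_iff] at hz
  rw [cutoff_norm_inv_smul_sq_eq_one (by positivity) (by linarith), one_mul,
    Real.norm_of_nonneg (hg0 z)]

lemma tendsto_integral_cutoff_mul (hg : Integrable g μ) :
    Tendsto (fun ρ : ℝ => ∫ z, cutoff (‖ρ⁻¹ • z‖ ^ 2) * g z ∂μ) atTop (𝓝 (∫ z, g z ∂μ)) := by
  refine tendsto_integral_filter_of_dominated_convergence (fun z => ‖g z‖) ?_
    (.of_forall fun ρ => .of_forall fun z => ?_) hg.norm (.of_forall fun z => ?_)
  · filter_upwards [eventually_gt_atTop (0 : ℝ)] with r hr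
    exact (integrable_cutoff_mul hr hg.integrableOn).aestronglyMeasurable
  · rw [norm_mul, Real.norm_of_nonneg (cutoff_nonneg _)]
    exact mul_le_of_le_one_left (norm_nonneg _) (cutoff_le_one _)
  · refine tendsto_const_nhds.congr' ?_
    filter_upwards [eventually_gt_atTop 0, eventually_ge_atTop (2 * ‖z‖)] with ρ hρ hz
    rw [cutoff_norm_inv_smul_sq_eq_one hρ hz, one_mul]

variable [FiniteDimensional ℝ E] [μ.IsAddHaarMeasure] {m k : ℕ} {f : E → ℝ}

lemma pow_mul_integral_truncatedRiesz_mul_comp_smul (hd : Module.finrank ℝ E = m + k) {ρ : ℝ}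
    (hρ : 0 < ρ) :
    ρ ^ k * ∫ z, truncatedRiesz m z * f (ρ • z) ∂μ =
      ∫ z, cutoff (‖ρ⁻¹ • z‖ ^ 2) * ((‖z‖ ^ m)⁻¹ * f z) ∂μ := by
  have hscale := Measure.integral_comp_smul μ (fun z => truncatedRiesz m (ρ⁻¹ • z) * f z) ρ
  simp only [inv_smul_smul₀ hρ.ne'] at hscale
  rw [hscale, smul_eq_mul, ← mul_assoc, ← integral_const_mul]
  refine integral_congr_ae (.of_forall fun z => ?_)
  simp only [truncatedRiesz, norm_smul, norm_inv, Real.norm_of_nonneg hρ.le]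
  rw [abs_of_nonneg (by positivity), hd, pow_add, mul_pow ρ⁻¹ ‖z‖ m, inv_pow ρ m]
  field_simp

lemma integrableOn_ball_inv_norm_pow_mul (hm : m < Module.finrank ℝ E) (hf : Measurable f) {B : ℝ}
    (hB : ∀ z, |f z| ≤ B) (r : ℝ) :
    IntegrableOn (fun z => (‖z‖ ^ m)⁻¹ * f z) (ball 0 r) μ :=
  (integrableOn_ball_inv_norm_pow hm r).mul_bdd (c := B) hf.aestronglyMeasurable (.of_forall hB)

lemma tendsto_setIntegral_ball_comp_smul (hd : Module.finrank ℝ E = m + k) (hk : 0 < k)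
    (hf0 : ∀ z, 0 ≤ f z) (hf : Integrable (fun z => (‖z‖ ^ m)⁻¹ * f z) μ) :
    Tendsto (fun ρ : ℝ => ∫ z in ball 0 1, f (ρ • z) ∂μ) atTop (𝓝 0) := by
  have hlim : Tendsto (fun ρ : ℝ => (ρ ^ k)⁻¹ * ∫ z, (‖z‖ ^ m)⁻¹ * f z ∂μ) atTop (𝓝 0) := by
    simpa only [Function.comp_apply, zero_mul] using (tendsto_inv_atTop_zero.comp
      (tendsto_pow_atTop (α := ℝ) hk.ne')).mul_const (∫ z, (‖z‖ ^ m)⁻¹ * f z ∂μ)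
  refine squeeze_zero' (.of_forall fun ρ => integral_nonneg fun z => hf0 _) ?_ hlim
  filter_upwards [eventually_gt_atTop 0] with ρ hρ
  have : Nontrivial E := Module.nontrivial_of_finrank_pos (R := ℝ) (by omega)
  have hball : ∫ z in ball 0 ρ, f z ∂μ ≤ ρ ^ m * ∫ z, (‖z‖ ^ m)⁻¹ * f z ∂μ := by
    rw [← integral_const_mul, ← integral_indicator measurableSet_ball]
    refine integral_mono_of_nonneg
      (.of_forall fun z => Set.indicator_nonneg (fun z _ => hf0 z) z) (hf.const_mul _) ?_
    filter_upwards [Measure.ae_ne μ 0] with z hz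
    refine Set.indicator_apply_le' (fun hzρ => ?_) fun _ =>
      mul_nonneg (by positivity) (mul_nonneg (by positivity) (hf0 z))
    rw [mem_ball_zero_iff] at hzρ
    rw [← mul_assoc]
    refine le_mul_of_one_le_left (hf0 z) ?_
    rw [← div_eq_mul_inv, one_le_div (by positivity)]
    gcongr
  rw [Measure.setIntegral_comp_smul_of_pos _ _ _ hρ, smul_unitBall_of_pos hρ, hd, smul_eq_mul,
    pow_add, mul_inv, mul_comm (ρ ^ m)⁻¹, mul_assoc]
  gcongr
  rwa [inv_mul_le_iff₀ (by positivity)]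

end RieszPotential

section GlobalIntegralEquation

/-- `U` is a nonnegative, bounded and continuous solution of the integral equations
`κ Uᵢ = |·|^(-m) * (|U|^(s-1) Uᵢ)` on the whole space. -/
structure IsIntegralSolution {E ι : Type*} [NormedAddCommGroup E] [MeasurableSpace E] [Fintype ι]
    (μ : Measure E) (m : ℕ) (s κ : ℝ) (U : E → EuclideanSpace ℝ ι) : Prop where
  continuous : Continuous U
  nonneg : ∀ x i, 0 ≤ U x i
  exists_norm_le : ∃ B, ∀ x, ‖U x‖ ≤ B
  integrable : ∀ y i, Integrable (fun z => (‖y - z‖ ^ m)⁻¹ * coupling s (U z) i) μ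
  eqn : ∀ y i, κ * U y i = ∫ z, (‖y - z‖ ^ m)⁻¹ * coupling s (U z) i ∂μ

variable {m : ℕ} {ι : Type*} [Fintype ι] {s B : ℝ}
  {U : EuclideanSpace ℝ (Fin (m + 4)) → EuclideanSpace ℝ ι}

local notation "𝔼" => EuclideanSpace ℝ (Fin (m + 4))

namespace LocalIntegralSystem

lemma exists_abs_integral_cutoffErrorKernel_le {r : ℝ} (hU : LocalIntegralSystem m s B r U) :
    ∃ G, 0 ≤ G ∧ ∀ i (y : 𝔼) (ρ : ℝ), |∫ z, cutoffErrorKernel m z * U (y + ρ • z) i| ≤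
      G * ∫ z in ball 0 1, U (y + ρ • z) i := by
  obtain ⟨G, hG⟩ := (continuous_cutoffErrorKernel (m := m)).bounded_above_of_compact_support
    (.intro (isCompact_closedBall 0 1) fun z hz => cutoffErrorKernel_eq_zero
      (by rw [mem_closedBall_zero_iff, not_le] at hz; exact hz.le))
  refine ⟨G, (norm_nonneg _).trans (hG 0), fun i y ρ => ?_⟩
  have hint : IntegrableOn (fun z => U (y + ρ • z) i) (ball (0 : 𝔼) 1) := by
    refine Measure.integrableOn_of_bounded (M := B) measure_ball_lt_top.ne
      ((hU.measurable_apply i).comp (by fun_prop)).aestronglyMeasurable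
      (.of_forall fun z => hU.abs_apply_le _ i)
  rw [← Real.norm_eq_abs, ← integral_const_mul, ← integral_indicator measurableSet_ball]
  refine norm_integral_le_of_norm_le
    ((integrable_indicator_iff measurableSet_ball).2 (hint.const_mul G)) (.of_forall fun z => ?_)
  rcases lt_or_ge ‖z‖ 1 with hz | hz
  · rw [Set.indicator_of_mem (by simpa using hz), norm_mul, Real.norm_of_nonneg (hU.nonneg _ i)]
    exact mul_le_mul_of_nonneg_right (hG z) (hU.nonneg _ i)
  · rw [Set.indicator_of_notMem (by simpa using hz), cutoffErrorKernel_eq_zero hz, zero_mul,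
      norm_zero]

lemma integrable_riesz (hU : ∀ r, LocalIntegralSystem m s B r U) (hs : 1 ≤ s) (y : 𝔼) (i : ι) :
    Integrable fun z => (‖z‖ ^ m)⁻¹ * coupling s (U (y + z)) i := by
  obtain ⟨G, hG0, hG⟩ := (hU 0).exists_abs_integral_cutoffErrorKernel_le
  have hcoupling_nonneg (z : 𝔼) : 0 ≤ coupling s (U z) i :=
    coupling_apply_nonneg s ((hU 0).nonneg z i)
  refine integrable_of_integral_cutoff_mul_le
    (C := |biharmonicConst m * U y i| + G * (volume.real (ball (0 : 𝔼) 1) * B))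
    (integrableOn_ball_inv_norm_pow_mul (by simp)
      (((hU 0).measurable_coupling_apply hs i).comp (measurable_const_add y))
      fun z => abs_coupling_apply_le (by linarith) ((hU 0).norm_le _) i)
    (fun z => mul_nonneg (by positivity) (hcoupling_nonneg _)) fun ρ hρ => ?_
  have haverage : ∫ z in ball (0 : 𝔼) 1, U (y + ρ • z) i ≤ volume.real (ball (0 : 𝔼) 1) * B := by
    rw [← smul_eq_mul, ← setIntegral_const]
    exact integral_mono_of_nonneg (.of_forall fun z => (hU 0).nonneg _ i)
      (integrableOn_const measure_ball_lt_top.ne)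
      (.of_forall fun z => (le_abs_self _).trans ((hU 0).abs_apply_le _ i))
  have heqn := (hU (‖y‖ + ρ + 1)).eqn i y ρ hρ (by linarith)
  rw [pow_mul_integral_truncatedRiesz_mul_comp_smul (by simp)
    hρ (f := fun z => coupling s (U (y + z)) i)] at heqn
  have herror := (abs_le.1 ((hG i y ρ).trans (mul_le_mul_of_nonneg_left haverage hG0))).1
  linarith [le_abs_self (biharmonicConst m * U y i)]

lemma tendsto_average (hU : ∀ r, LocalIntegralSystem m s B r U) (hs : 1 ≤ s) (y : 𝔼) (i : ι) :
    Tendsto (fun ρ : ℝ => ∫ z in ball 0 1, U (y + ρ • z) i) atTop (𝓝 0) := by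
  have hcoupling := tendsto_setIntegral_ball_comp_smul (k := 4) (by simp) (by norm_num)
    (fun z => coupling_apply_nonneg s ((hU 0).nonneg (y + z) i)) (integrable_riesz hU hs y i)
  set W := volume.real (ball (0 : 𝔼) 1)
  have hle {e : ℝ} (he : 0 < e) (ρ : ℝ) : ∫ z in ball 0 1, U (y + ρ • z) i ≤
      e * W + (e ^ (s - 1))⁻¹ * ∫ z in ball 0 1, coupling s (U (y + ρ • z)) i := by
    have hint : IntegrableOn (fun z => coupling s (U (y + ρ • z)) i) (ball (0 : 𝔼) 1) :=
      Measure.integrableOn_of_bounded (M := B ^ s) measure_ball_lt_top.ne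
        (((hU 0).measurable_coupling_apply hs i).comp (by fun_prop)).aestronglyMeasurable
        (.of_forall fun z => abs_coupling_apply_le (by linarith) ((hU 0).norm_le _) i)
    have hconst : IntegrableOn (fun _ => e) (ball (0 : 𝔼) 1) :=
      integrableOn_const measure_ball_lt_top.ne
    rw [mul_comm e, ← smul_eq_mul W, ← setIntegral_const, ← integral_const_mul,
      ← integral_add hconst (hint.const_mul _)]
    exact integral_mono_of_nonneg (.of_forall fun z => (hU 0).nonneg _ i)
      (hconst.add (hint.const_mul _)) (.of_forall fun z =>
        apply_le_add_mul_coupling_apply hs ((hU 0).nonneg _ i) he)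
  refine tendsto_order.2 ⟨fun a ha => .of_forall fun ρ => ha.trans_le
    (integral_nonneg fun z => (hU 0).nonneg _ i), fun ε hε => ?_⟩
  obtain ⟨e, he, heε⟩ : ∃ e > 0, e * W < ε :=
    ⟨ε / (W + 1), by positivity, by rw [div_mul_eq_mul_div, div_lt_iff₀ (by positivity)]; nlinarith⟩
  have hlim := (hcoupling.const_mul (e ^ (s - 1))⁻¹).const_add (e * W)
  rw [mul_zero, add_zero] at hlim
  filter_upwards [hlim.eventually_lt_const heε] with ρ hρ
  exact (hle he ρ).trans_lt hρ

lemma eq_integral (hU : ∀ r, LocalIntegralSystem m s B r U) (hs : 1 ≤ s) (y : 𝔼) (i : ι) :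
    biharmonicConst m * U y i = ∫ z, (‖z‖ ^ m)⁻¹ * coupling s (U (y + z)) i := by
  obtain ⟨G, -, hG⟩ := (hU 0).exists_abs_integral_cutoffErrorKernel_le
  have herror : Tendsto (fun ρ : ℝ => ∫ z, cutoffErrorKernel m z * U (y + ρ • z) i) atTop (𝓝 0) :=
    squeeze_zero_norm (hG i y)
      (by simpa only [mul_zero] using (tendsto_average hU hs y i).const_mul G)
  have hsum := (tendsto_integral_cutoff_mul (integrable_riesz hU hs y i)).add herror
  rw [add_zero] at hsum
  refine tendsto_nhds_unique (tendsto_const_nhds.congr' ?_) hsum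
  filter_upwards [eventually_gt_atTop 0] with ρ hρ
  rw [(hU (‖y‖ + ρ + 1)).eqn i y ρ hρ (by linarith), pow_mul_integral_truncatedRiesz_mul_comp_smul
    (by simp) hρ (f := fun z => coupling s (U (y + z)) i)]

theorem isIntegralSolution (hU : ∀ r, LocalIntegralSystem m s B r U) (hs : 1 ≤ s)
    (hcont : Continuous U) : IsIntegralSolution volume m s (biharmonicConst m) U where
  continuous := hcont
  nonneg := (hU 0).nonneg
  exists_norm_le := ⟨B, (hU 0).norm_le⟩
  integrable y i := by
    simpa only [norm_sub_rev y, add_sub_cancel] using (integrable_riesz hU hs y i).comp_sub_right y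
  eqn y i := by
    rw [eq_integral hU hs, ← integral_sub_right_eq_self _ y]
    simp only [norm_sub_rev y, add_sub_cancel]

end LocalIntegralSystem

end GlobalIntegralEquation

section SmallSets

variable {E : Type*} [NormedAddCommGroup E] [NormedSpace ℝ E] [FiniteDimensional ℝ E]
  [MeasurableSpace E] [BorelSpace E] {μ : Measure E} [μ.IsAddHaarMeasure] {m : ℕ} {η : ℝ}

lemma integrableOn_ball_inv_norm_sub_pow (hm : m < Module.finrank ℝ E) (y : E) (r : ℝ) :
    IntegrableOn (fun z => (‖y - z‖ ^ m)⁻¹) (ball 0 r) μ := by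
  have hshift := ((integrable_indicator_iff measurableSet_ball).2
    (integrableOn_ball_inv_norm_pow (μ := μ) hm (r + ‖y‖))).comp_sub_right y
  refine hshift.integrableOn.congr_fun (fun z hz => ?_) measurableSet_ball
  have hmem : z - y ∈ ball 0 (r + ‖y‖) := by
    rw [mem_ball_zero_iff] at hz ⊢
    linarith [norm_sub_le z y]
  simp only [Set.indicator_of_mem hmem, norm_sub_rev]

lemma exists_forall_setIntegral_inv_norm_sub_pow_le (hm : m < Module.finrank ℝ E) (hη : 0 < η) :
    ∃ b > 0, ∀ A : Set E, μ A < b → ∀ y, ∫ z in A, (‖y - z‖ ^ m)⁻¹ ∂μ ≤ η := by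
  set f : E → ℝ := (ball 0 1).indicator fun z => (‖z‖ ^ m)⁻¹
  have hf : Integrable f μ :=
    (integrable_indicator_iff measurableSet_ball).2 (integrableOn_ball_inv_norm_pow hm 1)
  have hf0 (z : E) : 0 ≤ f z := Set.indicator_nonneg (fun _ _ => by positivity) z
  have hbound (z : E) : (‖z‖ ^ m)⁻¹ ≤ f z + 1 := by
    by_cases hz : z ∈ ball 0 1
    · simp only [f, Set.indicator_of_mem hz, le_add_iff_nonneg_right, zero_le_one]
    · rw [mem_ball_zero_iff, not_lt] at hz
      exact (inv_le_one_of_one_le₀ (one_le_pow₀ hz)).trans (by linarith [hf0 z])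
  have hlim : Tendsto (fun A => ∫ z in A, f z ∂μ + μ.real A) (comap μ (𝓝 0)) (𝓝 (0 + 0)) :=
    (hf.tendsto_setIntegral_nhds_zero (s := id) tendsto_comap).add
      ((ENNReal.tendsto_toReal ENNReal.zero_ne_top).comp tendsto_comap)
  have hsmall := hlim.eventually_lt_const (by rwa [add_zero])
  rw [eventually_comap, ENNReal.nhds_zero_basis.eventually_iff] at hsmall
  obtain ⟨b, hb, hsmall⟩ := hsmall
  refine ⟨b, hb, fun A hA y => ?_⟩
  have hone : IntegrableOn (fun _ => (1 : ℝ)) A μ := integrableOn_const hA.ne_top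
  calc ∫ z in A, (‖y - z‖ ^ m)⁻¹ ∂μ ≤ ∫ z in A, (f (z - y) + 1) ∂μ :=
        integral_mono_of_nonneg (.of_forall fun z => by positivity)
          ((hf.comp_sub_right y).integrableOn.add hone)
          (.of_forall fun z => by simpa only [norm_sub_rev y] using hbound (z - y))
    _ = ∫ z in (y + ·) ⁻¹' A, f z ∂μ + μ.real ((y + ·) ⁻¹' A) := by
        rw [integral_add (hf.comp_sub_right y).integrableOn hone, setIntegral_const, smul_eq_mul,
          mul_one, ← (measurePreserving_add_left μ y).setIntegral_preimage_emb
          (measurableEmbedding_addLeft y), measureReal_def, measureReal_def, measure_preimage_add]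
        simp only [add_sub_cancel_left]
    _ ≤ η := (hsmall (x := μ ((y + ·) ⁻¹' A)) (by rwa [Set.mem_Iio, measure_preimage_add]) _ rfl).le

lemma exists_forall_setIntegral_shell_le (hm : m < Module.finrank ℝ E) (r : ℝ) (hη : 0 < η) :
    ∃ δ > 0, ∀ l ≥ r, ∀ y : E,
      ∫ z in (closedBall 0 l)ᶜ ∩ ball 0 (r + δ), (‖y - z‖ ^ m)⁻¹ ∂μ ≤ η := by
  obtain ⟨b, hb, hsmall⟩ := exists_forall_setIntegral_inv_norm_sub_pow_le (μ := μ) hm hη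
  have hshell := tendsto_measure_biInter_gt (μ := μ) (a := r)
    (s := fun ρ => (closedBall (0 : E) r)ᶜ ∩ ball 0 ρ)
    (fun ρ _ => (measurableSet_closedBall.compl.inter measurableSet_ball).nullMeasurableSet)
    (fun ρ ρ' _ h => Set.inter_subset_inter_right _ (ball_subset_ball h))
    ⟨r + 1, by simp, measure_ne_top_of_subset Set.inter_subset_right measure_ball_lt_top.ne⟩
  have hempty : ⋂ ρ > r, (closedBall (0 : E) r)ᶜ ∩ ball 0 ρ = ∅ := by
    refine Set.eq_empty_of_forall_notMem fun z hz => ?_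
    simp only [Set.mem_iInter, Set.mem_inter_iff, Set.mem_compl_iff, mem_closedBall_zero_iff,
      mem_ball_zero_iff, not_le] at hz
    exact lt_irrefl _ (hz ‖z‖ (hz (r + 1) (by simp)).1).2
  rw [hempty, measure_empty] at hshell
  obtain ⟨ρ, hρ, hρr⟩ := ((hshell.eventually_lt_const hb).and self_mem_nhdsWithin).exists
  refine ⟨ρ - r, sub_pos.2 hρr, fun l hl y => hsmall _ (lt_of_le_of_lt (measure_mono ?_) hρ) y⟩
  rw [add_sub_cancel]
  exact Set.inter_subset_inter_left _ (Set.compl_subset_compl.2 (closedBall_subset_closedBall hl))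

end SmallSets

section Inversion

open EuclideanGeometry

variable {E : Type*} [NormedAddCommGroup E] [InnerProductSpace ℝ E] {l : ℝ}

lemma inversion_zero_left (l : ℝ) (y : E) : inversion 0 l y = (l / ‖y‖) ^ 2 • y := by
  simp only [inversion, dist_zero_right, vsub_eq_sub, sub_zero, vadd_eq_add, add_zero]

lemma norm_inversion_zero_left (l : ℝ) (y : E) : ‖inversion 0 l y‖ = l ^ 2 / ‖y‖ := by
  simpa only [dist_zero_right] using dist_inversion_center (0 : E) y l

lemma norm_sub_inversion_zero_left (l : ℝ) {y z : E} (hy : y ≠ 0) (hz : z ≠ 0) :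
    ‖y - inversion 0 l z‖ = ‖y‖ / ‖z‖ * ‖inversion 0 l y - z‖ := by
  have h := dist_inversion_mul_dist_center_eq (R := l) hy hz
  rw [dist_zero_right, dist_zero_right, dist_eq_norm, dist_eq_norm] at h
  rw [div_mul_eq_mul_div, eq_div_iff (norm_ne_zero_iff.2 hz), ← h, mul_comm]

lemma sq_norm_mul_norm_inversion_sub (l : ℝ) {y : E} (hy : y ≠ 0) (z : E) :
    (‖y‖ * ‖inversion 0 l y - z‖) ^ 2 =
      l ^ 2 * ‖y - z‖ ^ 2 + (‖y‖ ^ 2 - l ^ 2) * (‖z‖ ^ 2 - l ^ 2) := by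
  have hy' : ‖y‖ ≠ 0 := norm_ne_zero_iff.2 hy
  rw [mul_pow, norm_sub_sq_real, norm_sub_sq_real, norm_inversion_zero_left, inversion_zero_left,
    real_inner_smul_left]
  field_simp
  ring

lemma image_inversion_compl_closedBall (hl : 0 < l) :
    inversion 0 l '' (closedBall (0 : E) l)ᶜ = ball 0 l \ {0} := by
  rw [(inversion_involutive 0 hl.ne').image_eq_preimage_symm]
  ext x
  simp only [Set.mem_preimage, Set.mem_compl_iff, mem_closedBall_zero_iff, not_le, Set.mem_sdiff,
    mem_ball_zero_iff, Set.mem_singleton_iff, norm_inversion_zero_left]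
  rcases eq_or_ne x 0 with rfl | hx
  · simp [hl.le]
  · have hx' : 0 < ‖x‖ := norm_pos_iff.2 hx
    rw [lt_div_iff₀ hx', sq, mul_lt_mul_iff_right₀ hl]
    simp [hx]

lemma hasFDerivWithinAt_inversion_compl_closedBall (hl : 0 < l) {z : E}
    (hz : z ∈ (closedBall 0 l)ᶜ) :
    HasFDerivWithinAt (inversion 0 l) ((l / ‖z‖) ^ 2 • ((ℝ ∙ z)ᗮ.reflection : E →L[ℝ] E))
      (closedBall 0 l)ᶜ z := by
  have hz0 : z ≠ 0 := by
    rintro rfl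
    exact hz (mem_closedBall_self hl.le)
  simpa only [dist_zero_right, sub_zero] using (hasFDerivAt_inversion hz0).hasFDerivWithinAt

variable [FiniteDimensional ℝ E]

lemma abs_det_smul_reflection {c : ℝ} (hc : 0 ≤ c) (z : E) :
    |(c • ((ℝ ∙ z)ᗮ.reflection : E →L[ℝ] E)).det| = c ^ Module.finrank ℝ E := by
  change |LinearMap.det (c • ((ℝ ∙ z)ᗮ.reflection.toLinearEquiv : E →ₗ[ℝ] E))| = _
  rw [LinearMap.det_smul, Submodule.det_reflection, abs_mul, abs_pow (-1 : ℝ), abs_neg, abs_one,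
    one_pow, mul_one, abs_of_nonneg (by positivity)]

variable [MeasurableSpace E] [BorelSpace E] {μ : Measure E} [μ.IsAddHaarMeasure] {G : E → ℝ}

lemma integrableOn_compl_closedBall_comp_inversion (hl : 0 < l) (hG : Integrable G μ) :
    IntegrableOn (fun z => (l / ‖z‖) ^ (2 * Module.finrank ℝ E) * G (inversion 0 l z))
      (closedBall 0 l)ᶜ μ := by
  have h := (integrableOn_image_iff_integrableOn_abs_det_fderiv_smul μ
    measurableSet_closedBall.compl (fun z => hasFDerivWithinAt_inversion_compl_closedBall hl)
    (inversion_injective 0 hl.ne').injOn G).1 hG.integrableOn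
  simpa only [abs_det_smul_reflection (sq_nonneg _), ← pow_mul, smul_eq_mul] using h

lemma integral_eq_add_integral_comp_inversion [Nontrivial E] (hl : 0 < l) (hG : Integrable G μ) :
    ∫ z, G z ∂μ = ∫ z in (closedBall 0 l)ᶜ, G z ∂μ +
      ∫ z in (closedBall 0 l)ᶜ,
        (l / ‖z‖) ^ (2 * Module.finrank ℝ E) * G (inversion 0 l z) ∂μ := by
  have h := integral_image_eq_integral_abs_det_fderiv_smul μ measurableSet_closedBall.compl
    (fun z => hasFDerivWithinAt_inversion_compl_closedBall hl)
    (inversion_injective (0 : E) hl.ne').injOn G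
  simp only [abs_det_smul_reflection (sq_nonneg _), ← pow_mul, smul_eq_mul] at h
  have hball : (ball (0 : E) l \ {0} : Set E) =ᵐ[μ] closedBall 0 l := by
    refine (sdiff_null_ae_eq_self (measure_singleton 0)).trans ?_
    rw [← closedBall_sdiff_sphere]
    exact sdiff_null_ae_eq_self (Measure.addHaar_sphere_of_ne_zero μ 0 hl.ne')
  rw [← h, image_inversion_compl_closedBall hl, setIntegral_congr_set hball, add_comm]
  exact (integral_add_compl measurableSet_closedBall hG).symm

end Inversion

section KelvinTransform

open EuclideanGeometry

variable {E F ι : Type*} [NormedAddCommGroup E] [InnerProductSpace ℝ E] [AddCommGroup F]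
  [Module ℝ F] {m : ℕ} {s l a : ℝ} {U : E → EuclideanSpace ℝ ι} {y z : E}

/-- The Kelvin transform of `U` with respect to the sphere of radius `l` centred at the origin,
weighted by the homogeneity of the kernel `‖y - z‖ ^ (-m)`. -/
noncomputable def kelvin (m : ℕ) (l : ℝ) (U : E → F) (y : E) : F :=
  (l / ‖y‖) ^ m • U (inversion 0 l y)

/-- The conclusion of the method of moving spheres at radius `l`: outside the ball of radius `l`,
each component of `U` dominates that of its Kelvin transform. -/
def KelvinLE (m : ℕ) (l : ℝ) (U : E → EuclideanSpace ℝ ι) : Prop :=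
  ∀ y, l < ‖y‖ → ∀ i, kelvin m l U y i ≤ U y i

lemma kelvin_zero_radius (hm : m ≠ 0) (U : E → F) : kelvin m 0 U = 0 := by
  ext y
  simp only [kelvin, zero_div, zero_pow hm, zero_smul, Pi.zero_apply]

lemma kelvinLE_zero_radius (hm : m ≠ 0) (hU : ∀ x i, 0 ≤ U x i) : KelvinLE m 0 U := by
  intro y _ i
  rw [kelvin_zero_radius hm]
  exact hU y i

lemma kelvin_apply_nonneg (hl : 0 ≤ l) (hU : ∀ x i, 0 ≤ U x i) (y : E) (i : ι) :
    0 ≤ kelvin m l U y i :=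
  mul_nonneg (by positivity) (hU _ i)

lemma kelvin_apply_le (hl : 0 ≤ l) (hU : ∀ x i, 0 ≤ U x i) {B : ℝ} (hB : ∀ x i, U x i ≤ B)
    (hy : l < ‖y‖) (i : ι) : kelvin m l U y i ≤ B :=
  (mul_le_of_le_one_left (hU _ i) (pow_le_one₀ (by positivity)
    ((div_le_one (hl.trans_lt hy)).2 hy.le))).trans (hB _ i)

lemma isClosed_setOf_kelvinLE (hU : Continuous U) : IsClosed {l | KelvinLE m l U} := by
  rw [show {l | KelvinLE m l U} = ⋂ y, ⋂ i, {l | l < ‖y‖ → kelvin m l U y i ≤ U y i} by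
    ext l
    simp only [KelvinLE, Set.mem_ofPred_eq, Set.mem_iInter]
    exact forall_congr' fun y => forall_comm]
  refine isClosed_iInter fun y => isClosed_iInter fun i =>
    isClosed_imp isOpen_Iio (isClosed_le ?_ continuous_const)
  simp only [kelvin, inversion_zero_left, PiLp.smul_apply]
  fun_prop

variable [Fintype ι]

/-- The Kelvin transform, in the variable `y`, of the kernel `‖y - z‖ ^ (-m)`. -/
noncomputable def reflectedKernel (m : ℕ) (l : ℝ) (y z : E) : ℝ :=
  (l / ‖y‖) ^ m * (‖inversion 0 l y - z‖ ^ m)⁻¹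

/-- The kernel `‖y - z‖ ^ (-m)` made to vanish on the sphere of radius `l` by subtracting its
reflection. -/
noncomputable def greenKernel (m : ℕ) (l : ℝ) (y z : E) : ℝ :=
  (‖y - z‖ ^ m)⁻¹ - reflectedKernel m l y z

/-- The nonlinearity in the integral equation satisfied by `kelvin m l U`. In the subcritical case
the exponent of `l / ‖z‖` is positive, so that it is dominated by `coupling s ∘ kelvin m l U`
outside the ball of radius `l`. -/
noncomputable def kelvinCoupling (m : ℕ) (s l : ℝ) (U : E → EuclideanSpace ℝ ι) (z : E) :
    EuclideanSpace ℝ ι :=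
  (l / ‖z‖) ^ (2 * Module.finrank ℝ E - m * (s + 1) : ℝ) • coupling s (kelvin m l U z)

lemma reflectedKernel_zero_radius (hm : m ≠ 0) (y z : E) : reflectedKernel m 0 y z = 0 := by
  rw [reflectedKernel, zero_div, zero_pow hm, zero_mul]

lemma kelvinCoupling_zero_radius (hm : m ≠ 0) (z : E) : kelvinCoupling m s 0 U z = 0 := by
  rw [kelvinCoupling, kelvin_zero_radius hm, Pi.zero_apply, coupling, smul_zero, smul_zero]

lemma reflectedKernel_mul_kelvinCoupling (hs : s ≠ 0) (hl : 0 < l) (hy : y ≠ 0) (hz : z ≠ 0)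
    (i : ι) :
    reflectedKernel m l y z * kelvinCoupling m s l U z i =
      (l / ‖z‖) ^ (2 * Module.finrank ℝ E) *
        ((‖y - inversion 0 l z‖ ^ m)⁻¹ * coupling s (U (inversion 0 l z)) i) := by
  have hz' : 0 < ‖z‖ := norm_pos_iff.2 hz
  have hc : 0 < l / ‖z‖ := by positivity
  have hpow : (l / ‖z‖) ^ (2 * Module.finrank ℝ E) = (l / ‖z‖) ^ m *
      ((l / ‖z‖) ^ (2 * Module.finrank ℝ E - m * (s + 1) : ℝ) * ((l / ‖z‖) ^ m) ^ s) := by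
    rw [← Real.rpow_natCast, ← Real.rpow_natCast, ← Real.rpow_mul hc.le, ← Real.rpow_add hc,
      ← Real.rpow_add hc]
    push_cast
    ring_nf
  have hratio : (l / ‖z‖) ^ m * (‖z‖ / ‖y‖) ^ m = (l / ‖y‖) ^ m := by
    rw [← mul_pow, div_mul_div_cancel₀ hz'.ne']
  rw [hpow, norm_sub_inversion_zero_left l hy hz, reflectedKernel, kelvinCoupling, kelvin,
    coupling_smul hs (by positivity), mul_pow, mul_inv, ← inv_pow (‖y‖ / ‖z‖), inv_div, ← hratio]
  simp only [PiLp.smul_apply, smul_eq_mul]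
  ring

lemma inv_norm_sub_pow_eq_mul_reflectedKernel (m : ℕ) (hl : 0 < l) (hy : y ≠ 0) (z : E) :
    (‖y - z‖ ^ m)⁻¹ = (l / ‖y‖) ^ m * reflectedKernel m l (inversion 0 l y) z := by
  have hratio : l / ‖y‖ * (l / (l ^ 2 / ‖y‖)) = 1 := by
    have := hl.ne'
    have := norm_ne_zero_iff.2 hy
    field_simp
  rw [reflectedKernel, inversion_inversion 0 hl.ne', norm_inversion_zero_left, ← mul_assoc,
    ← mul_pow, hratio, one_pow, one_mul]

lemma greenKernel_mul_sub_eq (m : ℕ) (s l : ℝ) (U : E → EuclideanSpace ℝ ι) (y z : E) (i : ι) :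
    greenKernel m l y z * (coupling s (U z) i - kelvinCoupling m s l U z i) =
      ((‖y - z‖ ^ m)⁻¹ * coupling s (U z) i +
        reflectedKernel m l y z * kelvinCoupling m s l U z i) -
      (reflectedKernel m l y z * coupling s (U z) i +
        (‖y - z‖ ^ m)⁻¹ * kelvinCoupling m s l U z i) := by
  rw [greenKernel]
  ring

lemma reflectedKernel_le_mul {r : ℝ} (hl : 0 ≤ l) (hy : l < ‖y‖) (hz : l < ‖z‖) (hyz : z ≠ y)
    (h : l * ‖y - z‖ ≤ r * (‖y‖ * ‖inversion 0 l y - z‖)) :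
    reflectedKernel m l y z ≤ r ^ m * (‖y - z‖ ^ m)⁻¹ := by
  have hy' : 0 < ‖y‖ := hl.trans_lt hy
  have hyz' : 0 < ‖y - z‖ := norm_pos_iff.2 (sub_ne_zero.2 hyz.symm)
  have hinv : ‖inversion 0 l y‖ ≤ l := by
    rw [norm_inversion_zero_left, div_le_iff₀ hy', sq]
    gcongr
  have hsub : 0 < ‖inversion 0 l y - z‖ := by
    rw [norm_pos_iff, sub_ne_zero]
    rintro rfl
    exact hz.not_ge hinv
  rw [reflectedKernel, ← inv_pow, ← inv_pow, ← mul_pow, ← mul_pow]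
  refine pow_le_pow_left₀ (by positivity) ?_ m
  rw [div_mul_eq_mul_div, div_le_iff₀ hy', ← div_eq_mul_inv, ← div_eq_mul_inv, div_mul_eq_mul_div,
    div_le_div_iff₀ hsub hyz']
  linarith

lemma greenKernel_nonneg (hl : 0 ≤ l) (hy : l < ‖y‖) (hz : l < ‖z‖) (hyz : z ≠ y) :
    0 ≤ greenKernel m l y z := by
  have hy0 : y ≠ 0 := norm_pos_iff.1 (hl.trans_lt hy)
  have hsq : (l * ‖y - z‖) ^ 2 ≤ (‖y‖ * ‖inversion 0 l y - z‖) ^ 2 := by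
    have hy2 : l ^ 2 ≤ ‖y‖ ^ 2 := by gcongr
    have hz2 : l ^ 2 ≤ ‖z‖ ^ 2 := by gcongr
    rw [sq_norm_mul_norm_inversion_sub l hy0, mul_pow]
    linarith [mul_nonneg (sub_nonneg.2 hy2) (sub_nonneg.2 hz2)]
  have h := reflectedKernel_le_mul (m := m) (r := 1) hl hy hz hyz
    (by simpa only [one_mul] using (pow_le_pow_iff_left₀ (by positivity) (by positivity)
      two_ne_zero).1 hsq)
  rw [one_pow, one_mul] at h
  exact sub_nonneg.2 h

lemma greenKernel_le (hl : 0 ≤ l) (y z : E) : greenKernel m l y z ≤ (‖y - z‖ ^ m)⁻¹ :=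
  sub_le_self _ (by rw [reflectedKernel]; positivity)

lemma reflectedKernel_le (hl : 0 ≤ l) (ha : l < a) (hz : a ≤ ‖z‖) (hzy : ‖z‖ ≤ ‖y‖)
    (hyz : z ≠ y) :
    reflectedKernel m l y z ≤ (2 * a * l / (a ^ 2 + l ^ 2)) ^ m * (‖y - z‖ ^ m)⁻¹ := by
  have ha0 : 0 < a := hl.trans_lt ha
  have hy0 : y ≠ 0 := norm_pos_iff.1 (by linarith)
  have hyz2 : ‖y - z‖ ≤ 2 * ‖y‖ := (norm_sub_le _ _).trans (by linarith)
  have hla : l ^ 2 ≤ a ^ 2 := by gcongr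
  have haz : a ^ 2 ≤ ‖z‖ ^ 2 := by gcongr
  have hay : a ^ 2 ≤ ‖y‖ ^ 2 := by gcongr; linarith
  have hdist : (a ^ 2 - l ^ 2) ^ 2 * ‖y - z‖ ^ 2 ≤
      4 * (a ^ 2 * ((‖y‖ ^ 2 - l ^ 2) * (‖z‖ ^ 2 - l ^ 2))) :=
    calc (a ^ 2 - l ^ 2) ^ 2 * ‖y - z‖ ^ 2 ≤ (a ^ 2 - l ^ 2) ^ 2 * (2 * ‖y‖) ^ 2 := by gcongr
      _ = 4 * (((a ^ 2 - l ^ 2) * ‖y‖ ^ 2) * (a ^ 2 - l ^ 2)) := by ring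
      _ ≤ 4 * ((a ^ 2 * (‖y‖ ^ 2 - l ^ 2)) * (‖z‖ ^ 2 - l ^ 2)) := by
        refine mul_le_mul_of_nonneg_left (mul_le_mul ?_ (by linarith) (by linarith) ?_)
          zero_le_four
        · linarith [mul_le_mul_of_nonneg_left hay (sq_nonneg l)]
        · exact mul_nonneg (sq_nonneg a) (by linarith)
      _ = _ := by ring
  have hsq : ((a ^ 2 + l ^ 2) * (l * ‖y - z‖)) ^ 2 ≤
      (2 * a * l * (‖y‖ * ‖inversion 0 l y - z‖)) ^ 2 := by
    rw [mul_pow _ (‖y‖ * _), sq_norm_mul_norm_inversion_sub l hy0]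
    linarith [mul_le_mul_of_nonneg_left hdist (sq_nonneg l)]
  refine reflectedKernel_le_mul hl (by linarith) (by linarith) hyz ?_
  rw [div_mul_eq_mul_div, le_div_iff₀' (by positivity)]
  exact (pow_le_pow_iff_left₀ (by positivity) (by positivity) two_ne_zero).1 hsq

lemma exists_pos_forall_le_greenKernel (hm : m ≠ 0) (hl : 0 ≤ l) (ha : l < a) :
    ∃ c > 0, ∀ y z : E, a ≤ ‖z‖ → ‖z‖ < ‖y‖ → c * (‖y‖ ^ m)⁻¹ ≤ greenKernel m l y z := by
  have ha0 : 0 < a := hl.trans_lt ha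
  have hq : (2 * a * l / (a ^ 2 + l ^ 2)) ^ m < 1 := by
    refine pow_lt_one₀ (by positivity) ((div_lt_one (by positivity)).2 ?_) hm
    linarith [sq_pos_of_pos (sub_pos.2 ha)]
  refine ⟨(1 - (2 * a * l / (a ^ 2 + l ^ 2)) ^ m) * (2 ^ m)⁻¹,
    mul_pos (sub_pos.2 hq) (by positivity), fun y z hz hzy => ?_⟩
  have hyz : z ≠ y := fun h => hzy.ne (congrArg norm h)
  have hyz' : 0 < ‖y - z‖ := norm_pos_iff.2 (sub_ne_zero.2 hyz.symm)
  have hyz2 : ‖y - z‖ ≤ 2 * ‖y‖ := (norm_sub_le _ _).trans (by linarith)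
  calc (1 - (2 * a * l / (a ^ 2 + l ^ 2)) ^ m) * (2 ^ m)⁻¹ * (‖y‖ ^ m)⁻¹
      = (1 - (2 * a * l / (a ^ 2 + l ^ 2)) ^ m) * ((2 * ‖y‖) ^ m)⁻¹ := by
        rw [mul_pow, mul_inv, mul_assoc]
    _ ≤ (1 - (2 * a * l / (a ^ 2 + l ^ 2)) ^ m) * (‖y - z‖ ^ m)⁻¹ := by gcongr
    _ ≤ greenKernel m l y z := by
        rw [greenKernel, sub_mul, one_mul]
        linarith [reflectedKernel_le (m := m) hl ha hz hzy.le hyz]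

lemma kelvinCoupling_apply_le (hτ : m * (s + 1) ≤ 2 * Module.finrank ℝ E) (hl : 0 ≤ l)
    (hU : ∀ x i, 0 ≤ U x i) (hz : l < ‖z‖) (i : ι) :
    kelvinCoupling m s l U z i ≤ coupling s (kelvin m l U z) i := by
  have hratio : l / ‖z‖ ≤ 1 := (div_le_one (hl.trans_lt hz)).2 hz.le
  exact mul_le_of_le_one_left (coupling_apply_nonneg s (kelvin_apply_nonneg hl hU z i))
    (Real.rpow_le_one (by positivity) hratio (sub_nonneg.2 hτ))

lemma kelvinCoupling_apply_le_coupling (hs : 1 ≤ s) (hτ : m * (s + 1) ≤ 2 * Module.finrank ℝ E)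
    (hl : 0 ≤ l) (hU : ∀ x i, 0 ≤ U x i) (hz : l < ‖z‖) (h : ∀ j, kelvin m l U z j ≤ U z j)
    (i : ι) : kelvinCoupling m s l U z i ≤ coupling s (U z) i :=
  (kelvinCoupling_apply_le hτ hl hU hz i).trans
    (coupling_apply_mono hs (kelvin_apply_nonneg hl hU z) h i)

end KelvinTransform

namespace IsIntegralSolution

section Positivity

variable {E ι : Type*} [NormedAddCommGroup E] [MeasurableSpace E] [Fintype ι] {μ : Measure E}
  {m : ℕ} {s κ : ℝ} {U : E → EuclideanSpace ℝ ι}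

lemma translate [BorelSpace E] [μ.IsAddLeftInvariant] (h : IsIntegralSolution μ m s κ U) (c : E) :
    IsIntegralSolution μ m s κ (fun x => U (c + x)) where
  continuous := h.continuous.comp (continuous_const_add c)
  nonneg x := h.nonneg (c + x)
  exists_norm_le := h.exists_norm_le.imp fun _ hB x => hB (c + x)
  integrable y i := by
    simpa only [add_sub_add_left_eq_sub] using (h.integrable (c + y) i).comp_add_left c
  eqn y i := by
    rw [h.eqn, ← integral_add_left_eq_self _ c]
    simp only [add_sub_add_left_eq_sub]

lemma continuous_coupling_apply (h : IsIntegralSolution μ m s κ U) (hs : 1 ≤ s) (i : ι) :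
    Continuous fun x => coupling s (U x) i :=
  (PiLp.continuous_apply 2 _ i).comp ((continuous_coupling hs).comp h.continuous)

variable [NullSingletonClass μ] [μ.IsOpenPosMeasure]

lemma apply_pos (h : IsIntegralSolution μ m s κ U) (hs : 1 ≤ s) {x₀ : E} {i : ι}
    (hx₀ : U x₀ i ≠ 0) (y : E) : 0 < U y i := by
  refine (h.nonneg y i).lt_of_ne' fun hy => hx₀ ?_
  have hint := h.eqn y i
  rw [hy, mul_zero, eq_comm, integral_eq_zero_iff_of_nonneg
    (fun z => mul_nonneg (by positivity) (coupling_apply_nonneg s (h.nonneg z i)))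
    (h.integrable y i)] at hint
  have hae : (fun x => coupling s (U x) i) =ᵐ[μ] fun _ => 0 := by
    filter_upwards [hint, Measure.ae_ne μ y] with z hz hzy
    have hyz : 0 < ‖y - z‖ := norm_pos_iff.2 (sub_ne_zero.2 hzy.symm)
    exact (mul_eq_zero.1 hz).resolve_left (by positivity)
  have hzero := ((h.continuous_coupling_apply hs i).ae_eq_iff_eq μ continuous_const).1 hae
  exact apply_eq_zero_of_coupling_apply_eq_zero (congrFun hzero x₀)

lemma exists_pos_forall_le_coupling_apply [ProperSpace E]
    (h : IsIntegralSolution μ m s κ U) (hs : 1 ≤ s) {x₀ : E} {i : ι} (hx₀ : U x₀ i ≠ 0) (r : ℝ) :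
    ∃ c > 0, ∀ z ∈ closedBall (0 : E) r, c ≤ coupling s (U z) i :=
  (isCompact_closedBall 0 r).exists_forall_le' (h.continuous_coupling_apply hs i).continuousOn
    fun z _ => (coupling_apply_nonneg s (h.nonneg z i)).lt_of_ne'
      fun hz => (h.apply_pos hs hx₀ z).ne' (apply_eq_zero_of_coupling_apply_eq_zero hz)

end Positivity

section Difference

open EuclideanGeometry

variable {E ι : Type*} [NormedAddCommGroup E] [InnerProductSpace ℝ E] [MeasurableSpace E]
  [Fintype ι] {μ : Measure E} {m : ℕ} {s κ l : ℝ} {U : E → EuclideanSpace ℝ ι} {y : E}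

lemma integrableOn_reflectedKernel_mul_coupling (h : IsIntegralSolution μ m s κ U) (i : ι) :
    IntegrableOn (fun z => reflectedKernel m l y z * coupling s (U z) i) (closedBall 0 l)ᶜ μ := by
  simp only [reflectedKernel, mul_assoc]
  exact (h.integrable (inversion 0 l y) i).integrableOn.const_mul _

variable [FiniteDimensional ℝ E] [BorelSpace E] [μ.IsAddHaarMeasure]

lemma integrableOn_reflectedKernel_mul_kelvinCoupling (h : IsIntegralSolution μ m s κ U)
    (hs : s ≠ 0) (hl : 0 < l) (hy : y ≠ 0) (i : ι) :
    IntegrableOn (fun z => reflectedKernel m l y z * kelvinCoupling m s l U z i)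
      (closedBall 0 l)ᶜ μ :=
  (integrableOn_compl_closedBall_comp_inversion hl (h.integrable y i)).congr_fun
    (fun z hz => (reflectedKernel_mul_kelvinCoupling hs hl hy
      (by rintro rfl; exact hz (mem_closedBall_self hl.le)) i).symm) measurableSet_closedBall.compl

lemma const_mul_apply_eq (h : IsIntegralSolution μ m s κ U) (hs : s ≠ 0) (hl : 0 < l) (hy : y ≠ 0)
    (i : ι) :
    κ * U y i = ∫ z in (closedBall 0 l)ᶜ, (‖y - z‖ ^ m)⁻¹ * coupling s (U z) i ∂μ +
      ∫ z in (closedBall 0 l)ᶜ, reflectedKernel m l y z * kelvinCoupling m s l U z i ∂μ := by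
  have : Nontrivial E := ⟨y, 0, hy⟩
  rw [h.eqn, integral_eq_add_integral_comp_inversion hl (h.integrable y i)]
  congr 1
  exact setIntegral_congr_fun measurableSet_closedBall.compl fun z hz =>
    (reflectedKernel_mul_kelvinCoupling hs hl hy
      (by rintro rfl; exact hz (mem_closedBall_self hl.le)) i).symm

lemma integrableOn_inv_norm_mul_kelvinCoupling (h : IsIntegralSolution μ m s κ U) (hs : s ≠ 0)
    (hl : 0 < l) (hy : y ≠ 0) (i : ι) :
    IntegrableOn (fun z => (‖y - z‖ ^ m)⁻¹ * kelvinCoupling m s l U z i) (closedBall 0 l)ᶜ μ := by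
  simp only [inv_norm_sub_pow_eq_mul_reflectedKernel m hl hy, mul_assoc]
  exact (h.integrableOn_reflectedKernel_mul_kelvinCoupling hs hl
    (by rwa [Ne, inversion_eq_center hl.ne']) i).const_mul _

lemma const_mul_kelvin_eq (h : IsIntegralSolution μ m s κ U) (hs : s ≠ 0) (hl : 0 < l)
    (hy : y ≠ 0) (i : ι) :
    κ * kelvin m l U y i =
      ∫ z in (closedBall 0 l)ᶜ, reflectedKernel m l y z * coupling s (U z) i ∂μ +
        ∫ z in (closedBall 0 l)ᶜ, (‖y - z‖ ^ m)⁻¹ * kelvinCoupling m s l U z i ∂μ := by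
  simp only [inv_norm_sub_pow_eq_mul_reflectedKernel m hl hy]
  simp only [reflectedKernel.eq_1 m l y, mul_assoc]
  rw [integral_const_mul, integral_const_mul, ← mul_add,
    ← h.const_mul_apply_eq hs hl (by rwa [Ne, inversion_eq_center hl.ne']) i, kelvin,
    PiLp.smul_apply, smul_eq_mul]
  ring

lemma integrableOn_greenKernel_mul_sub (h : IsIntegralSolution μ m s κ U) (hm : m ≠ 0)
    (hs : s ≠ 0) (hl : 0 ≤ l) (hy : y ≠ 0) (i : ι) :
    IntegrableOn (fun z => greenKernel m l y z * (coupling s (U z) i - kelvinCoupling m s l U z i))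
      (closedBall 0 l)ᶜ μ := by
  rcases hl.eq_or_lt with rfl | hl
  · simpa only [greenKernel, reflectedKernel_zero_radius hm, kelvinCoupling_zero_radius hm,
      PiLp.zero_apply, sub_zero] using (h.integrable y i).integrableOn
  · simp only [greenKernel_mul_sub_eq]
    exact ((h.integrable y i).integrableOn.add
      (h.integrableOn_reflectedKernel_mul_kelvinCoupling hs hl hy i)).sub
      ((h.integrableOn_reflectedKernel_mul_coupling i).add
        (h.integrableOn_inv_norm_mul_kelvinCoupling hs hl hy i))

lemma const_mul_apply_sub_kelvin_eq (h : IsIntegralSolution μ m s κ U) (hm : m ≠ 0) (hs : s ≠ 0)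
    (hl : 0 ≤ l) (hy : y ≠ 0) (i : ι) :
    κ * (U y i - kelvin m l U y i) = ∫ z in (closedBall 0 l)ᶜ,
      greenKernel m l y z * (coupling s (U z) i - kelvinCoupling m s l U z i) ∂μ := by
  have : Nontrivial E := ⟨y, 0, hy⟩
  rcases hl.eq_or_lt with rfl | hl
  · simp only [greenKernel, reflectedKernel_zero_radius hm, kelvinCoupling_zero_radius hm,
      kelvin_zero_radius hm, Pi.zero_apply, PiLp.zero_apply, sub_zero, closedBall_zero]
    rw [h.eqn, restrict_compl_singleton]
  · simp only [greenKernel_mul_sub_eq]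
    rw [mul_sub, h.const_mul_apply_eq hs hl hy, h.const_mul_kelvin_eq hs hl hy, integral_sub,
      integral_add, integral_add]
    · exact h.integrableOn_reflectedKernel_mul_coupling i
    · exact h.integrableOn_inv_norm_mul_kelvinCoupling hs hl hy i
    · exact (h.integrable y i).integrableOn
    · exact h.integrableOn_reflectedKernel_mul_kelvinCoupling hs hl hy i
    · exact (h.integrable y i).integrableOn.add
        (h.integrableOn_reflectedKernel_mul_kelvinCoupling hs hl hy i)
    · exact (h.integrableOn_reflectedKernel_mul_coupling i).add
        (h.integrableOn_inv_norm_mul_kelvinCoupling hs hl hy i)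

end Difference

end IsIntegralSolution

section MovingSpheres

open EuclideanGeometry

variable {E ι : Type*} [NormedAddCommGroup E] [InnerProductSpace ℝ E] {m : ℕ} {l : ℝ}

lemma lt_of_mul_add_one_lt_two_mul {d : ℕ} {s : ℝ} (hs : 1 ≤ s) (h : m * (s + 1) < 2 * d) :
    m < d := by
  rw [← Nat.cast_lt (α := ℝ)]
  linarith [mul_le_mul_of_nonneg_left hs (m.cast_nonneg : (0 : ℝ) ≤ m)]

lemma eventually_forall_pow_mul_inversion_le [ProperSpace E] {u : E → ℝ} (hu : Continuous u)
    {l₀ r c : ℝ} (hr : 0 < r) (hc : 0 < c) :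
    ∀ᶠ l in 𝓝 l₀, ∀ y, r ≤ ‖y‖ →
      l ^ m * u (inversion 0 l y) ≤ l₀ ^ m * u (inversion 0 l₀ y) + c := by
  have hclose : ∀ᶠ l in 𝓝 l₀, ∀ θ ∈ closedBall (0 : E) r⁻¹,
      l ^ m * u (l ^ 2 • θ) - l₀ ^ m * u (l₀ ^ 2 • θ) < c := by
    refine (isCompact_closedBall 0 r⁻¹).eventually_forall_of_forall_eventually fun θ _ => ?_
    have hcont : Continuous fun q : ℝ × E =>
        q.1 ^ m * u (q.1 ^ 2 • q.2) - l₀ ^ m * u (l₀ ^ 2 • q.2) := by fun_prop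
    exact hcont.tendsto' (l₀, θ) 0 (sub_self _) |>.eventually_lt_const hc
  filter_upwards [hclose] with l hl y hy
  have hinv (t : ℝ) : inversion 0 t y = t ^ 2 • ((‖y‖ ^ 2)⁻¹ • y) := by
    rw [inversion_zero_left, smul_smul, div_pow, div_eq_mul_inv]
  have hmem : (‖y‖ ^ 2)⁻¹ • y ∈ closedBall (0 : E) r⁻¹ := by
    rw [mem_closedBall_zero_iff, norm_smul, norm_inv, norm_pow, norm_norm, sq, mul_inv,
      inv_mul_cancel_right₀ (hr.trans_le hy).ne']
    gcongr
  rw [hinv, hinv]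
  linarith [hl _ hmem]

variable [Fintype ι] [FiniteDimensional ℝ E] [MeasurableSpace E] [BorelSpace E] {μ : Measure E}
  [μ.IsAddHaarMeasure] {s κ ρ A : ℝ} {U : E → EuclideanSpace ℝ ι} {i : ι} {y : E}

namespace IsIntegralSolution

lemma const_mul_kelvin_le (h : IsIntegralSolution μ m s κ U) (hm : m ≠ 0)
    (hmd : m < Module.finrank ℝ E) (hs : s ≠ 0) (hl : 0 ≤ l) (hA : 0 ≤ A)
    (hfar : ∀ z, l < ‖z‖ → ρ ≤ ‖z‖ → kelvinCoupling m s l U z i ≤ coupling s (U z) i)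
    (hnear : ∀ z, l < ‖z‖ → kelvinCoupling m s l U z i ≤ coupling s (U z) i + A)
    (hy : l < ‖y‖) :
    κ * kelvin m l U y i ≤
      κ * U y i + A * ∫ z in (closedBall 0 l)ᶜ ∩ ball 0 ρ, (‖y - z‖ ^ m)⁻¹ ∂μ := by
  have hy0 : y ≠ 0 := norm_pos_iff.1 (hl.trans_lt hy)
  have : Nontrivial E := ⟨y, 0, hy0⟩
  have hbound : ∫ z in (closedBall 0 l)ᶜ, (ball 0 ρ).indicator (fun z => -A * (‖y - z‖ ^ m)⁻¹) z ∂μ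
      ≤ κ * (U y i - kelvin m l U y i) := by
    rw [h.const_mul_apply_sub_kelvin_eq hm hs hl hy0]
    refine integral_mono_ae ?_ (h.integrableOn_greenKernel_mul_sub hm hs hl hy0 i) ?_
    · exact ((integrable_indicator_iff measurableSet_ball).2
        ((integrableOn_ball_inv_norm_sub_pow hmd y ρ).const_mul _)).integrableOn
    filter_upwards [ae_restrict_of_ae (Measure.ae_ne μ y),
      ae_restrict_mem measurableSet_closedBall.compl] with z hzy hz
    rw [Set.mem_compl_iff, mem_closedBall_zero_iff, not_le] at hz
    have hG := greenKernel_nonneg (m := m) hl hy hz hzy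
    by_cases hzρ : z ∈ ball 0 ρ
    · rw [Set.indicator_of_mem hzρ]
      calc -A * (‖y - z‖ ^ m)⁻¹ ≤ -A * greenKernel m l y z :=
            mul_le_mul_of_nonpos_left (greenKernel_le hl y z) (by linarith)
        _ = greenKernel m l y z * -A := mul_comm _ _
        _ ≤ _ := mul_le_mul_of_nonneg_left (by linarith [hnear z hz]) hG
    · rw [Set.indicator_of_notMem hzρ]
      rw [mem_ball_zero_iff, not_lt] at hzρ
      exact mul_nonneg hG (sub_nonneg.2 (hfar z hz hzρ))
  rw [setIntegral_indicator measurableSet_ball, integral_const_mul] at hbound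
  linarith

lemma exists_pos_forall_kelvinLE (h : IsIntegralSolution μ m s κ U) (hm : m ≠ 0)
    (hmd : m < Module.finrank ℝ E) (hs : 1 ≤ s) (hτ : m * (s + 1) ≤ 2 * Module.finrank ℝ E)
    (hκ : 0 < κ) :
    ∃ η > 0, ∀ l ρ, 0 ≤ l →
      (∀ y, ∫ z in (closedBall 0 l)ᶜ ∩ ball 0 ρ, (‖y - z‖ ^ m)⁻¹ ∂μ ≤ η) →
      (∀ y, l < ‖y‖ → ρ ≤ ‖y‖ → ∀ i, kelvin m l U y i ≤ U y i) → KelvinLE m l U := by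
  obtain ⟨B, hB⟩ := h.exists_norm_le
  have hB0 : 0 ≤ B := (norm_nonneg _).trans (hB 0)
  have hUB (x : E) (i : ι) : U x i ≤ B :=
    (Real.le_norm_self _).trans ((PiLp.norm_apply_le (U x) i).trans (hB x))
  obtain ⟨L, hL, hLip⟩ := exists_coupling_apply_le_add ι hs hB0
  refine ⟨κ / (2 * (L + 1)), by positivity, fun l ρ hl hη hfar => ?_⟩
  have hhalf {W : ℝ} (hW : 0 ≤ W) (hle : ∀ y, l < ‖y‖ → ∀ i, kelvin m l U y i ≤ U y i + W) :
      ∀ y, l < ‖y‖ → ∀ i, kelvin m l U y i ≤ U y i + W / 2 := by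
    intro y hy i
    have hmax := h.const_mul_kelvin_le hm hmd (by linarith) hl (mul_nonneg hL hW)
      (fun z hz hzρ => kelvinCoupling_apply_le_coupling hs hτ hl h.nonneg hz (hfar z hz hzρ) i)
      (fun z hz => (kelvinCoupling_apply_le hτ hl h.nonneg hz i).trans (hLip _ _ W hW
        (fun j => ⟨h.nonneg z j, hUB z j⟩) (fun j => ⟨kelvin_apply_nonneg hl h.nonneg z j,
          kelvin_apply_le hl h.nonneg hUB hz j⟩) (hle z hz) i)) hy
    have hsmall : L * W * (κ / (2 * (L + 1))) ≤ κ * (W / 2) := by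
      rw [mul_div_assoc', div_le_iff₀ (by positivity)]
      linarith [mul_nonneg hκ.le hW]
    refine le_of_mul_le_mul_left ?_ hκ
    linarith [mul_le_mul_of_nonneg_left (hη y) (mul_nonneg hL hW)]
  have hiter (k : ℕ) : ∀ y, l < ‖y‖ → ∀ i, kelvin m l U y i ≤ U y i + B / 2 ^ k := by
    induction k with
    | zero =>
      intro y hy i
      rw [pow_zero, div_one]
      linarith [h.nonneg y i, kelvin_apply_le (m := m) hl h.nonneg hUB hy i]
    | succ k ih => simpa only [pow_succ, ← div_div] using hhalf (by positivity) ih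
  intro y hy i
  have hlim : Tendsto (fun k : ℕ => U y i + B / 2 ^ k) atTop (𝓝 (U y i)) := by
    simpa only [add_zero] using (tendsto_const_nhds (x := U y i)).add
      (tendsto_const_nhds.div_atTop (tendsto_pow_atTop_atTop_of_one_lt one_lt_two))
  exact ge_of_tendsto' hlim fun k => hiter k y hy i

lemma exists_pos_forall_le_coupling_sub_kelvinCoupling (h : IsIntegralSolution μ m s κ U)
    (hs : 1 ≤ s) (hτ : m * (s + 1) < 2 * Module.finrank ℝ E) (hl : 0 ≤ l) (hle : KelvinLE m l U)
    {x₀ : E} (hx₀ : U x₀ i ≠ 0) {a : ℝ} (ha : l < a) (r : ℝ) :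
    ∃ c > 0, ∀ z, a ≤ ‖z‖ → ‖z‖ ≤ r → c ≤ coupling s (U z) i - kelvinCoupling m s l U z i := by
  have : Nontrivial E := Module.nontrivial_of_finrank_pos (R := ℝ)
    (Nat.zero_lt_of_lt (lt_of_mul_add_one_lt_two_mul hs hτ))
  have ha0 : 0 < a := hl.trans_lt ha
  set τ : ℝ := 2 * Module.finrank ℝ E - m * (s + 1)
  have hτ0 : 0 < τ := sub_pos.2 hτ
  have hratio : (l / a) ^ τ < 1 :=
    Real.rpow_lt_one (by positivity) ((div_lt_one ha0).2 ha) hτ0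
  obtain ⟨c, hc, hcle⟩ := h.exists_pos_forall_le_coupling_apply hs hx₀ r
  refine ⟨(1 - (l / a) ^ τ) * c, mul_pos (sub_pos.2 hratio) hc, fun z hz hzr => ?_⟩
  have hkelvin : kelvinCoupling m s l U z i ≤ (l / a) ^ τ * coupling s (U z) i := by
    refine mul_le_mul (Real.rpow_le_rpow (by positivity) (by gcongr) hτ0.le)
      (coupling_apply_mono hs (kelvin_apply_nonneg hl h.nonneg z) (hle z (ha.trans_le hz)) i)
      (coupling_apply_nonneg s (kelvin_apply_nonneg hl h.nonneg z i)) (by positivity)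
  linarith [mul_le_mul_of_nonneg_left (hcle z (mem_closedBall_zero_iff.2 hzr))
    (sub_nonneg.2 hratio.le)]

lemma mul_measureReal_le_const_mul_apply_sub_kelvin (h : IsIntegralSolution μ m s κ U) (hm : m ≠ 0)
    (hs : 1 ≤ s) (hτ : m * (s + 1) ≤ 2 * Module.finrank ℝ E) (hl : 0 ≤ l) (hle : KelvinLE m l U)
    (hy : l < ‖y‖) {S : Set E} (hSm : MeasurableSet S) (hS : μ S ≠ ⊤) (hSl : S ⊆ (closedBall 0 l)ᶜ)
    {b : ℝ} (hb : ∀ z ∈ S,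
      b ≤ greenKernel m l y z * (coupling s (U z) i - kelvinCoupling m s l U z i)) :
    b * μ.real S ≤ κ * (U y i - kelvin m l U y i) := by
  have hy0 : y ≠ 0 := norm_pos_iff.1 (hl.trans_lt hy)
  have : Nontrivial E := ⟨y, 0, hy0⟩
  have hs0 : s ≠ 0 := by linarith
  have hint := h.integrableOn_greenKernel_mul_sub hm hs0 hl hy0 i
  rw [h.const_mul_apply_sub_kelvin_eq hm hs0 hl hy0]
  refine (setIntegral_ge_of_const_le_real hSm hS hb (hint.mono_set hSl)).trans
    (setIntegral_mono_set hint ?_ hSl.eventuallyLE)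
  filter_upwards [ae_restrict_of_ae (Measure.ae_ne μ y),
    ae_restrict_mem measurableSet_closedBall.compl] with z hzy hz
  rw [Set.mem_compl_iff, mem_closedBall_zero_iff, not_le] at hz
  exact mul_nonneg (greenKernel_nonneg hl hy hz hzy)
    (sub_nonneg.2 (kelvinCoupling_apply_le_coupling hs hτ hl h.nonneg hz (hle z hz) i))

lemma exists_pos_forall_mul_inv_norm_pow_le_sub_kelvin (h : IsIntegralSolution μ m s κ U)
    (hm : m ≠ 0) (hs : 1 ≤ s) (hτ : m * (s + 1) < 2 * Module.finrank ℝ E) (hκ : 0 < κ)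
    (hl : 0 ≤ l) (hle : KelvinLE m l U) {x₀ : E} (hx₀ : U x₀ i ≠ 0) (hρ : l < ρ) :
    ∃ c > 0, ∀ y, ρ ≤ ‖y‖ → c * (‖y‖ ^ m)⁻¹ ≤ U y i - kelvin m l U y i := by
  obtain ⟨a, hla, haρ⟩ := exists_between hρ
  obtain ⟨c₁, hc₁, hG⟩ := exists_pos_forall_le_greenKernel (E := E) hm hl hla
  obtain ⟨c₂, hc₂, hF⟩ :=
    h.exists_pos_forall_le_coupling_sub_kelvinCoupling hs hτ hl hle hx₀ hla ρ
  set S : Set E := ball 0 ρ \ closedBall 0 a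
  have : Nontrivial E := Module.nontrivial_of_finrank_pos (R := ℝ)
    (Nat.zero_lt_of_lt (lt_of_mul_add_one_lt_two_mul hs hτ))
  have hSopen : IsOpen S := isOpen_ball.sdiff isClosed_closedBall
  have hSfin : μ S ≠ ⊤ := measure_ne_top_of_subset Set.sdiff_subset measure_ball_lt_top.ne
  have hSpos : 0 < μ.real S := by
    obtain ⟨b, hab, hbρ⟩ := exists_between haρ
    obtain ⟨w, hw⟩ := exists_norm_eq E (show 0 ≤ b by linarith)
    refine ENNReal.toReal_pos (hSopen.measure_pos μ ⟨w, ?_, ?_⟩).ne' hSfin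
    · rwa [mem_ball_zero_iff, hw]
    · rwa [mem_closedBall_zero_iff, hw, not_le]
  refine ⟨c₁ * c₂ * μ.real S / κ, by positivity, fun y hy => ?_⟩
  have hbound := h.mul_measureReal_le_const_mul_apply_sub_kelvin (i := i) (S := S) hm hs hτ.le hl
    hle (hρ.trans_le hy) hSopen.measurableSet hSfin
    (fun z hz hzl => hz.2 (closedBall_subset_closedBall hla.le hzl))
    (b := c₁ * (‖y‖ ^ m)⁻¹ * c₂) fun z hz => by
      rw [Set.mem_sdiff, mem_ball_zero_iff, mem_closedBall_zero_iff, not_le] at hz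
      exact mul_le_mul (hG y z hz.2.le (hz.1.trans_le hy)) (hF z hz.2.le hz.1.le) hc₂.le
        (le_trans (by positivity) (hG y z hz.2.le (hz.1.trans_le hy)))
  rw [div_mul_eq_mul_div, div_le_iff₀ hκ]
  linarith

lemma eventually_nhdsGT_kelvinLE (h : IsIntegralSolution μ m s κ U) (hm : m ≠ 0) (hs : 1 ≤ s)
    (hτ : m * (s + 1) < 2 * Module.finrank ℝ E) (hκ : 0 < κ)
    {l₀ : ℝ} (hl₀ : 0 ≤ l₀) (hle : KelvinLE m l₀ U) : ∀ᶠ l in 𝓝[>] l₀, KelvinLE m l U := by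
  have hmd := lt_of_mul_add_one_lt_two_mul hs hτ
  obtain ⟨η, hη, hnear⟩ := h.exists_pos_forall_kelvinLE hm hmd hs hτ.le hκ
  obtain ⟨δ, hδ, hshell⟩ := exists_forall_setIntegral_shell_le (μ := μ) hmd l₀ hη
  have hr : 0 < l₀ + δ := by linarith
  have hfar : ∀ᶠ l in 𝓝 l₀, ∀ i y, l₀ + δ ≤ ‖y‖ → kelvin m l U y i ≤ U y i := by
    refine eventually_all.2 fun i => ?_
    by_cases hU : ∃ x₀, U x₀ i ≠ 0
    · obtain ⟨x₀, hx₀⟩ := hU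
      obtain ⟨c, hc, hgap⟩ := h.exists_pos_forall_mul_inv_norm_pow_le_sub_kelvin hm hs hτ hκ hl₀ hle
        hx₀ (lt_add_of_pos_right l₀ hδ)
      filter_upwards [eventually_forall_pow_mul_inversion_le (m := m) (l₀ := l₀)
        ((PiLp.continuous_apply 2 _ i).comp h.continuous) hr hc] with l hl y hy
      have hy0 : 0 < ‖y‖ ^ m := pow_pos (hr.trans_le hy) m
      have hly := hl y hy
      have hgapy := hgap y hy
      simp only [kelvin, PiLp.smul_apply, smul_eq_mul, div_pow, Function.comp_apply] at hly hgapy ⊢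
      rw [div_mul_eq_mul_div, ← div_eq_mul_inv, le_sub_iff_add_le, ← add_div, div_le_iff₀ hy0]
        at hgapy
      rw [div_mul_eq_mul_div, div_le_iff₀ hy0]
      linarith
    · push Not at hU
      simp [kelvin, hU]
  filter_upwards [hfar.filter_mono nhdsWithin_le_nhds, self_mem_nhdsWithin] with l hl hl₀l
  have hl₀l : l₀ < l := hl₀l
  exact hnear l (l₀ + δ) (hl₀.trans hl₀l.le) (hshell l hl₀l.le) fun y _ hy i => hl i y hy

lemma kelvinLE (h : IsIntegralSolution μ m s κ U) (hm : m ≠ 0) (hs : 1 ≤ s)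
    (hτ : m * (s + 1) < 2 * Module.finrank ℝ E) (hκ : 0 < κ)
    (hl : 0 ≤ l) : KelvinLE m l U :=
  (((isClosed_setOf_kelvinLE h.continuous).inter isClosed_Icc).Icc_subset_of_forall_mem_nhdsWithin
    (kelvinLE_zero_radius hm h.nonneg)
    (fun _ ht => h.eventually_nhdsGT_kelvinLE hm hs hτ hκ ht.2.1 ht.1)) ⟨hl, le_rfl⟩

end IsIntegralSolution

end MovingSpheres

section Liouville

open EuclideanGeometry

variable {E ι : Type*} [NormedAddCommGroup E] [InnerProductSpace ℝ E] [FiniteDimensional ℝ E]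
  [MeasurableSpace E] [BorelSpace E] [Fintype ι] {μ : Measure E} [μ.IsAddHaarMeasure] {m : ℕ}
  {s κ : ℝ} {U : E → EuclideanSpace ℝ ι}

namespace IsIntegralSolution

lemma pow_mul_apply_le_apply (h : IsIntegralSolution μ m s κ U) (hm : m ≠ 0) (hs : 1 ≤ s)
    (hτ : m * (s + 1) < 2 * Module.finrank ℝ E) (hκ : 0 < κ) {t : ℝ} (ht₀ : 0 < t) (ht₁ : t < 1)
    (w y : E) (i : ι) : t ^ m * U w i ≤ U y i := by
  rcases eq_or_ne y w with rfl | hyw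
  · exact mul_le_of_le_one_left (h.nonneg y i) (pow_le_one₀ ht₀.le ht₁.le)
  have ht : 1 - t ^ 2 ≠ 0 := by nlinarith
  set v : E := (1 - t ^ 2)⁻¹ • (y - w)
  have hv0 : v ≠ 0 := smul_ne_zero (inv_ne_zero ht) (sub_ne_zero.2 hyw)
  have hyv : y = w - t ^ 2 • v + v := by
    have : (1 - t ^ 2) • v = y - w := smul_inv_smul₀ ht _
    rw [sub_smul, one_smul] at this
    rw [sub_add_eq_add_sub, add_sub_assoc, this, add_sub_cancel]
  have hmoving := (h.translate (w - t ^ 2 • v)).kelvinLE hm hs hτ hκ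
    (by positivity : 0 ≤ t * ‖v‖) v (mul_lt_of_lt_one_left (norm_pos_iff.2 hv0) ht₁) i
  rwa [kelvin, inversion_zero_left, mul_div_cancel_right₀ _ (norm_ne_zero_iff.2 hv0),
    PiLp.smul_apply, smul_eq_mul, sub_add_cancel, ← hyv] at hmoving

lemma apply_le_apply (h : IsIntegralSolution μ m s κ U) (hm : m ≠ 0) (hs : 1 ≤ s)
    (hτ : m * (s + 1) < 2 * Module.finrank ℝ E) (hκ : 0 < κ) (w y : E) (i : ι) :
    U w i ≤ U y i := by
  have hlim : Tendsto (fun t : ℝ => t ^ m * U w i) (𝓝[<] 1) (𝓝 (U w i)) :=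
    ((by fun_prop : Continuous fun t : ℝ => t ^ m * U w i).tendsto' 1 _ (by simp)).mono_left
      nhdsWithin_le_nhds
  refine le_of_tendsto hlim ?_
  filter_upwards [Ioo_mem_nhdsLT one_pos] with t ht
  exact h.pow_mul_apply_le_apply hm hs hτ hκ ht.1 ht.2 w y i

end IsIntegralSolution

lemma integral_inv_norm_pow_eq_zero (hm : m ≠ Module.finrank ℝ E) :
    ∫ z : E, (‖z‖ ^ m)⁻¹ ∂μ = 0 := by
  have hscale := Measure.integral_comp_smul μ (fun z : E => (‖z‖ ^ m)⁻¹) 2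
  simp only [norm_smul, Real.norm_ofNat, mul_pow, mul_inv, integral_const_mul, smul_eq_mul,
    abs_inv, abs_pow, Nat.abs_ofNat] at hscale
  by_contra hJ
  exact hm (pow_right_injective₀ two_pos one_lt_two.ne' (inv_inj.1 (mul_right_cancel₀ hJ hscale)))

theorem IsIntegralSolution.eq_zero (h : IsIntegralSolution μ m s κ U) (hm : m ≠ 0) (hs : 1 ≤ s)
    (hτ : m * (s + 1) < 2 * Module.finrank ℝ E) (hκ : 0 < κ) : U = 0 := by
  have hconst (x : E) : U x = U 0 := by
    ext i
    exact (h.apply_le_apply hm hs hτ hκ x 0 i).antisymm (h.apply_le_apply hm hs hτ hκ 0 x i)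
  ext x i
  have heqn := h.eqn 0 i
  simp only [hconst, zero_sub, norm_neg] at heqn
  rw [integral_mul_const, integral_inv_norm_pow_eq_zero (lt_of_mul_add_one_lt_two_mul hs hτ).ne,
    zero_mul] at heqn
  rw [hconst]
  exact (mul_eq_zero.1 heqn).resolve_left hκ.ne'

end Liouville

section APrioriBound

variable {m n p : ℕ} {ι : Type*} [Fintype ι] {s : ℝ}

lemma IsIntegralSolution.eq_zero_of_subcritical
    {U : EuclideanSpace ℝ (Fin (m + 4)) → EuclideanSpace ℝ ι}
    (hU : IsIntegralSolution volume m s (biharmonicConst m) U) (hm : 0 < m) (hs : 1 ≤ s)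
    (hsub : s < ((m + 4 : ℕ) + 4) / ((m + 4 : ℕ) - 4)) : U = 0 := by
  refine hU.eq_zero hm.ne' hs ?_ (biharmonicConst_pos hm)
  rw [finrank_euclideanSpace_fin]
  push_cast at hsub ⊢
  rw [add_sub_cancel_right, lt_div_iff₀ (Nat.cast_pos.2 hm)] at hsub
  linarith

theorem IsNonnegSolutionOnBall.exists_radius_norm_apply_zero_ne (ι : Type*) [Fintype ι]
    (hn : 5 ≤ n) (hs : 1 < s) (hsub : s < ((n : ℝ) + 4) / ((n : ℝ) - 4)) {B c : ℝ} (hB : 0 ≤ B)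
    (hc : c ≠ 0) :
    ∃ R > 0, ∀ V : EuclideanSpace ℝ (Fin n) → EuclideanSpace ℝ ι,
      IsNonnegSolutionOnBall s V R → (∀ x ∈ ball 0 R, ‖V x‖ ≤ B) → ‖V 0‖ ≠ c := by
  obtain ⟨m, rfl⟩ := Nat.exists_eq_add_of_le' (show 4 ≤ n by lia)
  have hm : 0 < m := by lia
  by_contra! hbig
  choose V hV hVB hV0 using fun k : ℕ => hbig (k + 1) (by positivity)
  obtain ⟨U, hcont, hloc, hU0⟩ := LocalIntegralSystem.exists_entire_limit hm hs.le
    (fun k => (hV k).localIntegralSystem (hVB k) hB)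
    (tendsto_atTop_add_const_right _ 1 tendsto_natCast_atTop_atTop) (c := c) fun k => by
      rw [Set.indicator_of_mem (mem_ball_self (by positivity)), hV0]
  have hzero := (LocalIntegralSystem.isIntegralSolution hloc hs.le hcont).eq_zero_of_subcritical
    hm hs.le hsub
  rw [hzero, Pi.zero_apply, norm_zero] at hU0
  exact hc hU0.symm

theorem IsNonnegSolutionOnBall.exists_forall_norm_le (ι : Type*) [Fintype ι] (hn : 5 ≤ n)
    (hs : 1 < s) (hsub : s < ((n : ℝ) + 4) / ((n : ℝ) - 4)) :
    ∃ C > 0, ∀ U : EuclideanSpace ℝ (Fin n) → EuclideanSpace ℝ ι,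
      IsNonnegSolutionOnBall s U 1 →
        ∀ x ∈ ball 0 1, ‖U x‖ ≤ C * (1 - ‖x‖) ^ (-(4 / (s - 1))) := by
  obtain ⟨R, hR, hne⟩ := exists_radius_norm_apply_zero_ne ι hn hs hsub
    (B := 2 ^ (4 / (s - 1))) (by positivity) one_ne_zero
  refine ⟨(2 * R) ^ (4 / (s - 1)), by positivity, fun U hU x hx => ?_⟩
  by_contra! hlarge
  have hx₁ : 0 < 1 - ‖x‖ := sub_pos.2 (mem_ball_zero_iff.1 hx)
  rw [Real.rpow_neg hx₁.le, ← div_eq_mul_inv, div_lt_iff₀ (by positivity)] at hlarge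
  obtain ⟨V, hV, hVB, hV0⟩ := hU.exists_rescaled_solution hs hx hR hlarge
  exact hne V hV hVB hV0

lemma vnorm_eq_norm_toLp (U : Fin p → EuclideanSpace ℝ (Fin n) → ℝ)
    (x : EuclideanSpace ℝ (Fin n)) : vnorm U x = ‖WithLp.toLp 2 fun i => U i x‖ := by
  simp only [vnorm, EuclideanSpace.norm_eq, Real.norm_eq_abs, sq_abs]

end APrioriBound

theorem statement15_general (n p : ℕ) (hn : 5 ≤ n) (s : ℝ) (hs1 : 1 < s)
    (hs2 : s < ((n : ℝ) + 4) / ((n : ℝ) - 4)) :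
    ∃ C > (0 : ℝ),
      ∀ U : Fin p → EuclideanSpace ℝ (Fin n) → ℝ,
        (∀ i, ∀ x ∈ ball 0 1, 0 ≤ U i x) → (∀ i, ContDiffOn ℝ 4 (U i) (ball 0 1)) →
        (∀ i, ∀ x ∈ ball 0 1, bilap (U i) x = vnorm U x ^ (s - 1) * U i x) →
        ∀ x ∈ ball 0 1, vnorm U x ≤ C * (1 - ‖x‖) ^ (-(4 / (s - 1))) := by
  obtain ⟨C, hC, hbound⟩ := IsNonnegSolutionOnBall.exists_forall_norm_le (Fin p) hn hs1 hs2
  refine ⟨C, hC, fun U hnonneg hdiff heq x hx => ?_⟩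
  have hU : IsNonnegSolutionOnBall s (fun x => WithLp.toLp 2 fun i => U i x) 1 :=
    ⟨fun x hx i => hnonneg i x hx, contDiffOn_euclidean.2 hdiff, fun x hx i => by
      rw [heq i x hx, vnorm_eq_norm_toLp]; rfl⟩
  rw [vnorm_eq_norm_toLp]
  exact hbound _ hU x hx

/-- a priori interior upper bound, with a constant depending
only on `n`, `p` and `s`, for nonnegative solutions on the unit ball that
extend continuously to the closed ball. -/
theorem statement15 (n p : ℕ) (hn : 5 ≤ n) (hp : 1 ≤ p) (s : ℝ)
    (hs1 : 1 < s) (hs2 : s < ((n : ℝ) + 4) / ((n : ℝ) - 4)) :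
    ∃ C > (0 : ℝ),
      ∀ U : Fin p → EuclideanSpace ℝ (Fin n) → ℝ,
        (∀ i, ∀ x ∈ Metric.ball (0 : EuclideanSpace ℝ (Fin n)) 1, 0 ≤ U i x) →
        (∀ i, ContDiffOn ℝ 4 (U i) (Metric.ball (0 : EuclideanSpace ℝ (Fin n)) 1)) →
        (∀ i, ∀ x ∈ Metric.ball (0 : EuclideanSpace ℝ (Fin n)) 1,
          bilap (U i) x = (vnorm U x) ^ (s - 1) * U i x) →
        (∀ i, ∃ g : EuclideanSpace ℝ (Fin n) → ℝ,
          ContinuousOn g (Metric.closedBall (0 : EuclideanSpace ℝ (Fin n)) 1) ∧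
          ∀ x ∈ Metric.ball (0 : EuclideanSpace ℝ (Fin n)) 1, g x = U i x) →
        ∀ x ∈ Metric.ball (0 : EuclideanSpace ℝ (Fin n)) 1,
          vnorm U x ≤ C * (1 - ‖x‖) ^ (-(4 / (s - 1))) := by
  obtain ⟨C, hC, hbound⟩ := statement15_general n p hn s hs1 hs2
  exact ⟨C, hC, fun U hnonneg hdiff heq _ => hbound U hnonneg hdiff heq⟩
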